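/- For all 0 < σ < 1 and 0 < κ < 1 there is ε₃ > 0 such that for all sufficiently small δ > 0 the following holds. Let S be a subset of the unit circle {z ∈ ℂ : |z| = 1} which is a finite union of arcs of length δ, such that S = S⁻¹, |S| = δ^{1−σ} (arc-length measure), and for every ρ with δ < ρ < δ^{ε₃}, max_{a} |S ∩ B_ρ(a)| < ρ^{κ} · |S|. Let γ, λ ∈ ℝ with γ > 0 and |λ| ≥ δ^{ε₃}. Then the set D = { xy + γ/(xy) + λ(x/y + y/x) : x, y ∈ S_{(4)} } ⊆ ℂ satisfies N_δ(D) ≥ δ^{−ε₃−σ}. -/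

import Mathlib

/-!
The real part turns the problem into one about sums of cosines. If `x = e^{i(p+q)}` and
`y = e^{i(p-q)}`, then the element of `D` attached to `(x, y)` has real part
`(1 + γ) cos 2p + 2λ cos 2q` (`re_amplified`). The points `p = a ± a'` and `q = g + a₀`, with
angles `a, a', a₀, g` of `S`, are admissible, because `S = S⁻¹` makes both `p + q` and `p - q`
signed sums of four angles. So a small covering number of `D` says that `(1 + γ) E + 2λ G` is
covered by few `δ`-balls, where `E` consists of the numbers `cos 2(a ± a')` and `G` of the
numbers `cos 2(g + a₀)`.

Since `|λ|` is not small, the set `2λ G` already has about `δ^{-σ}` elements at scale `δ`. If `D`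
had covering number below `δ^{-σ-ε}`, the Plünnecke–Ruzsa inequality would therefore bound all
iterated sums and differences of `E` by `δ^{-σ-O(ε)}`. By the addition formula
`cos 2a cos 2a' = (cos 2(a+a') + cos 2(a-a')) / 2`, products of elements of
`B = {cos 2a}` are averages of elements of `E`, so sums of products of `B` are bounded as
well (`cnt_sumProd_le`), and `B` is an approximate ring at all scales between `δ` and `1`
(`approxRing_of_sumset`). The set `B` inherits non-concentration and size from `S`
(`exists_piece`), so a discretised ring theorem gives a contradiction.

The ring theorem is proved through the scale profile `f s = log_{1/δ} N_{δ^s}(B)`. The quotients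
of differences of `B` either leave a gap in `[0, 1]`, which makes some `B + tB` a direct sum, or
are dense, which makes all `B + xB` small (`quot_dichotomy`). By an `L²` count of collisions
averaged over `x`, the second case forces `B` to be concentrated or nearly full
(`one_le_of_sumDil`); the first case makes `f` strongly superadditive. In terms of `f`
(`ApproxRing.profile`) the first alternative raises the slope `f s / s` by `κ / 2` when passing
to a slightly larger `s` (`Profile.amplify`), and the second one is excluded because `f` stays
below slope `1` (`Profile.le_slope`). As the slope is at most about `1`, finitely many steps
give a contradiction (`no_profile`).
-/

open MeasureTheory Set
open scoped Pointwise

/-- The arc-length measure of a subset of the unit circle in `ℂ`, computed via the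
angles in `[0, 2π)`. -/
noncomputable def arcMeasure (S : Set ℂ) : ENNReal :=
  volume {θ : ℝ | θ ∈ Ico 0 (2 * Real.pi) ∧ Complex.exp (θ * Complex.I) ∈ S}

/-- `covN d δ S` is the least number of balls of radius `δ` (w.r.t. the distance
function `d`) needed to cover `S`. -/
noncomputable def covN {X : Type*} (d : X → X → ℝ) (δ : ℝ) (S : Set X) : ℕ :=
  sInf {n : ℕ | ∃ T : Finset X, T.card = n ∧ ∀ s ∈ S, ∃ t ∈ T, d s t ≤ δ}

/-! ### Covering numbers of finite sets of reals -/

/-- The covering number of a finite set of reals at scale `ρ`, encoded as the number of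
half-open cells `[kρ, (k+1)ρ)` that the set meets. -/
noncomputable def cnt (ρ : ℝ) (X : Finset ℝ) : ℕ := (X.image (fun x => ⌊x / ρ⌋)).card

/-- Comparison of labellings: if points with the same label `g` have integer values `h` that
differ by at most `k`, then there are at most `2k+1` values of `h` per label. -/
lemma card_image_le_mul {α β : Type*} [DecidableEq β] (X : Finset α) (g : α → β)
    (h : α → ℤ) (k : ℕ) (H : ∀ x ∈ X, ∀ y ∈ X, g x = g y → |h x - h y| ≤ k) :
    (X.image h).card ≤ (2 * k + 1) * (X.image g).card := by
  classical
  have hsub : X.image h ⊆ (X.image g).biUnion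
      (fun z => (X.filter (fun x => g x = z)).image h) := by
    intro w hw
    obtain ⟨x, hx, rfl⟩ := Finset.mem_image.1 hw
    simp only [Finset.mem_biUnion, Finset.mem_image, Finset.mem_filter]
    exact ⟨g x, ⟨x, hx, rfl⟩, x, ⟨hx, rfl⟩, rfl⟩
  refine (Finset.card_le_card hsub).trans ?_
  rw [mul_comm]
  refine Finset.card_biUnion_le_card_mul _ _ _ ?_
  intro z hz
  obtain ⟨x, hx, rfl⟩ := Finset.mem_image.1 hz
  have : (X.filter (fun y => g y = g x)).image h ⊆ Finset.Icc (h x - k) (h x + k) := by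
    intro w hw
    obtain ⟨y, hy, rfl⟩ := Finset.mem_image.1 hw
    obtain ⟨hy, hgy⟩ := Finset.mem_filter.1 hy
    have := abs_le.1 (H y hy x hx hgy)
    rw [Finset.mem_Icc]
    constructor <;> linarith [this.1, this.2]
  refine (Finset.card_le_card this).trans ?_
  rw [Int.card_Icc]
  omega

lemma floor_sub_le {a b : ℝ} {k : ℕ} (h : |a - b| ≤ k) : |⌊a⌋ - ⌊b⌋| ≤ (k : ℤ) := by
  obtain ⟨h1, h2⟩ := abs_le.1 h
  have h3 := Int.floor_le a
  have h4 := Int.lt_floor_add_one a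
  have h5 := Int.floor_le b
  have h6 := Int.lt_floor_add_one b
  rw [abs_le]
  constructor
  · have : (-(k : ℤ) : ℝ) < (⌊a⌋ - ⌊b⌋ : ℤ) + 1 := by push_cast; linarith
    have : (-(k : ℤ)) < (⌊a⌋ - ⌊b⌋ : ℤ) + 1 := by exact_mod_cast this
    omega
  · have : ((⌊a⌋ - ⌊b⌋ : ℤ) : ℝ) < (k : ℤ) + 1 := by push_cast; linarith
    have : (⌊a⌋ - ⌊b⌋ : ℤ) < (k : ℤ) + 1 := by exact_mod_cast this
    omega

lemma abs_sub_lt_of_floor {ρ x y : ℝ} (hρ : 0 < ρ) (h : ⌊x / ρ⌋ = ⌊y / ρ⌋) : |x - y| < ρ := by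
  have := Int.abs_sub_lt_one_of_floor_eq_floor h
  rw [← sub_div, abs_div, abs_of_pos hρ, div_lt_one hρ] at this
  exact this

/-- The covering-number form of `card_image_le_mul`. -/
lemma cnt_image_le {α β : Type*} [DecidableEq β] (X : Finset α) (g : α → β)
    (y : α → ℝ) {ρ : ℝ} (hρ : 0 < ρ) (k : ℕ)
    (H : ∀ x ∈ X, ∀ x' ∈ X, g x = g x' → |y x - y x'| ≤ k * ρ) :
    cnt ρ (X.image y) ≤ (2 * k + 1) * (X.image g).card := by
  unfold cnt
  rw [Finset.image_image]
  refine card_image_le_mul X g _ k ?_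
  intro a ha b hb hab
  refine floor_sub_le ?_
  rw [← sub_div, abs_div, abs_of_pos hρ, div_le_iff₀ hρ]
  exact H a ha b hb hab

lemma cnt_mono {ρ : ℝ} {X Y : Finset ℝ} (h : X ⊆ Y) : cnt ρ X ≤ cnt ρ Y :=
  Finset.card_le_card (Finset.image_subset_image h)

lemma cnt_pos {ρ : ℝ} {X : Finset ℝ} (h : X.Nonempty) : 0 < cnt ρ X :=
  Finset.card_pos.2 (h.image _)

/-- Covering numbers of the images of one set under two maps, when the second map expands
distances at least as much as the first one relative to the scales. -/
lemma cnt_image_le_cnt_image {α : Type*} (X : Finset α) (y w : α → ℝ) {ρ ρ' : ℝ} (hρ : 0 < ρ)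
    (hρ' : 0 < ρ') (k : ℕ)
    (H : ∀ x ∈ X, ∀ x' ∈ X, |w x - w x'| < ρ' → |y x - y x'| ≤ k * ρ) :
    cnt ρ (X.image y) ≤ (2 * k + 1) * cnt ρ' (X.image w) := by
  have := cnt_image_le X (fun x => ⌊w x / ρ'⌋) y hρ k
    (fun x hx x' hx' h => H x hx x' hx' (abs_sub_lt_of_floor hρ' h))
  refine this.trans (le_of_eq ?_)
  unfold cnt
  rw [Finset.image_image]
  rfl

lemma cnt_le_cnt {ρ ρ' : ℝ} (hρ : 0 < ρ) (hρ' : 0 < ρ') (k : ℕ) (h : ρ' ≤ k * ρ)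
    (X : Finset ℝ) : cnt ρ X ≤ (2 * k + 1) * cnt ρ' X := by
  have := cnt_image_le_cnt_image X id id hρ hρ' k (fun x _ x' _ hx => (hx.le.trans h))
  simpa using this

lemma cnt_le_three {ρ ρ' : ℝ} (hρ' : 0 < ρ') (h : ρ' ≤ ρ)
    (X : Finset ℝ) : cnt ρ X ≤ 3 * cnt ρ' X := by
  have := cnt_le_cnt (hρ'.trans_le h) hρ' 1 (by simpa using h) X
  simpa using this

/-- The real number `x ≥ 1` is at most an integer `k` with `2k+1 ≤ 5x`. -/
lemma exists_nat_five {x : ℝ} (hx : 1 ≤ x) : ∃ k : ℕ, x ≤ k ∧ (2 * (k : ℝ) + 1) ≤ 5 * x := by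
  refine ⟨⌈x⌉₊, Nat.le_ceil x, ?_⟩
  have := Nat.ceil_lt_add_one (a := x) (by linarith)
  linarith

lemma cnt_le_div {ρ ρ' : ℝ} (hρ : 0 < ρ) (h : ρ ≤ ρ') (X : Finset ℝ) :
    (cnt ρ X : ℝ) ≤ 5 * (ρ' / ρ) * cnt ρ' X := by
  obtain ⟨k, hk, hk'⟩ := exists_nat_five ((one_le_div hρ).2 h)
  have := cnt_le_cnt hρ (hρ.trans_le h) k ((div_le_iff₀ hρ).1 hk) X
  have h2 : (cnt ρ X : ℝ) ≤ (2 * k + 1) * cnt ρ' X := by exact_mod_cast this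
  exact h2.trans (by gcongr)

/-- A dilation by `a` with `0 < |a| ≤ 1`, followed by a translation, decreases covering numbers at
most by a factor `5 / |a|`. -/
lemma cnt_le_dilate {ρ a : ℝ} (hρ : 0 < ρ) (ha : a ≠ 0) (ha1 : |a| ≤ 1) {α : Type*}
    (X : Finset α) (y : α → ℝ) (t : ℝ) :
    (cnt ρ (X.image y) : ℝ) ≤ 5 / |a| * cnt ρ (X.image (fun x => a * y x + t)) := by
  have ha' : 0 < |a| := abs_pos.2 ha
  obtain ⟨k, hk, hk'⟩ := exists_nat_five ((one_le_div ha').2 ha1)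
  have := cnt_image_le_cnt_image X y (fun x => a * y x + t) hρ hρ k (by
    intro x _ x' _ h
    rw [add_sub_add_right_eq_sub, ← mul_sub, abs_mul] at h
    have : |y x - y x'| ≤ 1 / |a| * ρ := by
      rw [div_mul_eq_mul_div, one_mul, le_div_iff₀ ha', mul_comm]; exact h.le
    exact this.trans (by gcongr))
  have h2 : (cnt ρ (X.image y) : ℝ) ≤ (2 * k + 1) * cnt ρ (X.image (fun x => a * y x + t)) := by
    exact_mod_cast this
  refine h2.trans ?_
  have : 5 / |a| = 5 * (1 / |a|) := by ring
  rw [this]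
  gcongr

/-- A maximal `ρ`-separated subset has at least one fifth of the covering number. -/
lemma exists_separated {ρ : ℝ} (hρ : 0 < ρ) (X : Finset ℝ) :
    ∃ P ⊆ X, (∀ p ∈ P, ∀ q ∈ P, p ≠ q → ρ ≤ |p - q|) ∧ cnt ρ X ≤ 5 * P.card := by
  classical
  let F := X.powerset.filter (fun P => ∀ p ∈ P, ∀ q ∈ P, p ≠ q → ρ ≤ |p - q|)
  have hF : F.Nonempty := ⟨∅, by simp [F]⟩
  obtain ⟨P, hP, hmax⟩ := Finset.exists_max_image F Finset.card hF
  simp only [F, Finset.mem_filter, Finset.mem_powerset] at hP hmax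
  have hcov : ∀ x ∈ X, ∃ p ∈ P, |x - p| < ρ := by
    intro x hx
    by_contra! hcon
    have hxP : x ∉ P := fun h => by
      have := hcon x h
      simp at this
      linarith
    have := hmax (insert x P) ⟨Finset.insert_subset hx hP.1, by
      intro p hp q hq hpq
      rcases Finset.mem_insert.1 hp with hp1 | hp1 <;>
        rcases Finset.mem_insert.1 hq with hq1 | hq1
      · exact absurd (hp1.trans hq1.symm) hpq
      · rw [hp1]; exact hcon q hq1
      · rw [hq1, abs_sub_comm]; exact hcon p hp1
      · exact hP.2 p hp1 q hq1 hpq⟩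
    rw [Finset.card_insert_of_notMem hxP] at this
    omega
  choose! n hn using hcov
  refine ⟨P, hP.1, hP.2, ?_⟩
  have := cnt_image_le X n id hρ 2 (by
    intro x hx x' hx' h
    have h1 := (hn x hx).2
    have h2 := (hn x' hx').2
    rw [← h] at h2
    rw [abs_lt] at h1 h2
    simp only [id]
    rw [abs_le]
    push_cast
    constructor <;> linarith [h1.1, h1.2, h2.1, h2.2])
  simp only [Finset.image_id] at this
  refine this.trans ?_
  gcongr
  intro z hz
  obtain ⟨x, hx, rfl⟩ := Finset.mem_image.1 hz
  exact (hn x hx).1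

lemma card_le_cnt_image {α : Type*} (X : Finset α) (y : α → ℝ) {ρ : ℝ} (hρ : 0 < ρ)
    (H : ∀ x ∈ X, ∀ x' ∈ X, |y x - y x'| < ρ → x = x') : X.card ≤ cnt ρ (X.image y) := by
  unfold cnt
  rw [Finset.image_image, Finset.card_image_of_injOn]
  intro x hx x' hx' h
  exact H x hx x' hx' (abs_sub_lt_of_floor hρ h)

/-- A sum set `A + Y` with `Y` in an interval of length `4r` has covering number at scale
`ρ ≤ r` at least that of `Y` times the number of `r`-cells met by `A`, up to a constant. -/
lemma cnt_mul_cnt_le_cnt_add {ρ r : ℝ} (hρ : 0 < ρ) (hr : ρ ≤ r) (A Y : Finset ℝ) {x : ℝ}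
    (hY : ∀ y ∈ Y, y ∈ Icc x (x + 4 * r)) :
    (cnt r A : ℝ) * cnt ρ Y ≤ 275 * cnt ρ (A + Y) := by
  have hr0 : 0 < r := hρ.trans_le hr
  obtain ⟨P, hPA, hPs, hPc⟩ := exists_separated (ρ := 5 * r) (by linarith) A
  obtain ⟨Q, hQY, hQs, hQc⟩ := exists_separated hρ Y
  have h1 : (P ×ˢ Q).card ≤ cnt ρ ((P ×ˢ Q).image (fun p => p.1 + p.2)) := by
    refine card_le_cnt_image _ _ hρ ?_
    rintro ⟨p, q⟩ hp ⟨p', q'⟩ hp' h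
    rw [Finset.mem_product] at hp hp'
    simp only at hp hp' h
    have hq := hY q (hQY hp.2)
    have hq' := hY q' (hQY hp'.2)
    rw [mem_Icc] at hq hq'
    have hpp : p = p' := by
      by_contra hne
      have := hPs p hp.1 p' hp'.1 hne
      rw [abs_lt] at h
      rcases le_abs.1 this with h3 | h3 <;> linarith [h.1, h.2]
    subst hpp
    have hqq : q = q' := by
      by_contra hne
      have := hQs q hp.2 q' hp'.2 hne
      have e : p + q - (p + q') = q - q' := by ring
      rw [e] at h
      linarith
    rw [hqq]
  have h2 : cnt ρ ((P ×ˢ Q).image (fun p => p.1 + p.2)) ≤ cnt ρ (A + Y) := by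
    apply cnt_mono
    intro z hz
    obtain ⟨⟨p, q⟩, hp, rfl⟩ := Finset.mem_image.1 hz
    rw [Finset.mem_product] at hp
    exact Finset.add_mem_add (hPA hp.1) (hQY hp.2)
  have h3 := cnt_le_cnt hr0 (show 0 < 5 * r by linarith) 5 (by norm_num) A
  rw [Finset.card_product] at h1
  have h4 : cnt r A * cnt ρ Y ≤ (11 * (5 * P.card)) * (5 * Q.card) := by
    refine Nat.mul_le_mul (h3.trans ?_) hQc
    norm_num
    exact hPc
  have h5 : cnt r A * cnt ρ Y ≤ 275 * cnt ρ (A + Y) := by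
    calc _ ≤ _ := h4
      _ = 275 * (P.card * Q.card) := by ring
      _ ≤ _ := by gcongr; exact h1.trans h2
  exact_mod_cast h5

/-- Some `ρ`-cell contains at least the average share of the `δ`-covering number. -/
lemma exists_cell {δ ρ : ℝ} (X : Finset ℝ) (hX : X.Nonempty) :
    ∃ z : ℤ, (X.filter (fun x => ⌊x / ρ⌋ = z)).Nonempty ∧
      cnt δ X ≤ cnt ρ X * cnt δ (X.filter (fun x => ⌊x / ρ⌋ = z)) := by
  classical
  obtain ⟨z, hz, hmax⟩ := Finset.exists_max_image (X.image (fun x => ⌊x / ρ⌋))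
    (fun z => cnt δ (X.filter (fun x => ⌊x / ρ⌋ = z))) (hX.image _)
  refine ⟨z, ?_, ?_⟩
  · obtain ⟨x, hx, hxz⟩ := Finset.mem_image.1 hz
    exact ⟨x, Finset.mem_filter.2 ⟨hx, hxz⟩⟩
  have hsub : X.image (fun x => ⌊x / δ⌋) ⊆ (X.image (fun x => ⌊x / ρ⌋)).biUnion
      (fun z => (X.filter (fun x => ⌊x / ρ⌋ = z)).image (fun x => ⌊x / δ⌋)) := by
    intro w hw
    obtain ⟨x, hx, rfl⟩ := Finset.mem_image.1 hw
    simp only [Finset.mem_biUnion, Finset.mem_image, Finset.mem_filter]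
    exact ⟨_, ⟨x, hx, rfl⟩, x, ⟨hx, rfl⟩, rfl⟩
  refine (Finset.card_le_card hsub).trans ?_
  exact Finset.card_biUnion_le_card_mul _ _ _ hmax

/-! ### Approximate rings -/

/-- The eightfold signed sums of products of two elements of `B`, four with each sign. -/
noncomputable def sumProd (B : Finset ℝ) : Finset ℝ :=
  (B * B + B * B + B * B + B * B) - (B * B + B * B + B * B + B * B)

lemma mem_sumProd {B : Finset ℝ} {p₁ p₂ p₃ p₄ n₁ n₂ n₃ n₄ : ℝ} (h₁ : p₁ ∈ B * B)
    (h₂ : p₂ ∈ B * B) (h₃ : p₃ ∈ B * B) (h₄ : p₄ ∈ B * B) (k₁ : n₁ ∈ B * B)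
    (k₂ : n₂ ∈ B * B) (k₃ : n₃ ∈ B * B) (k₄ : n₄ ∈ B * B) :
    (p₁ + p₂ + p₃ + p₄) - (n₁ + n₂ + n₃ + n₄) ∈ sumProd B :=
  Finset.sub_mem_sub
    (Finset.add_mem_add (Finset.add_mem_add (Finset.add_mem_add h₁ h₂) h₃) h₄)
    (Finset.add_mem_add (Finset.add_mem_add (Finset.add_mem_add k₁ k₂) k₃) k₄)

/-- `B` behaves like a subring of `ℝ` at all scales `≥ δ`, up to a multiplicative error `K`:
a piece of length `≲ r` of a sum of products of `B`, or of `B` itself, has covering number at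
scale `ρ` at most `K` times the average covering number of the pieces of `B` of length `r`. -/
structure ApproxRing (δ K : ℝ) (B : Finset ℝ) : Prop where
  delta_pos : 0 < δ
  nonempty : B.Nonempty
  abs_le : ∀ b ∈ B, |b| ≤ 1
  diam : ∀ b ∈ B, ∀ b' ∈ B, |b - b'| ≤ 1
  ring : ∀ ρ r, δ ≤ ρ → ρ ≤ r → ∀ Y ⊆ sumProd B, ∀ x, (∀ y ∈ Y, y ∈ Icc x (x + 4 * r)) →
    (cnt ρ Y : ℝ) * cnt r B ≤ K * cnt ρ B
  unif : ∀ ρ r, δ ≤ ρ → ρ ≤ r → ∀ Y ⊆ B, ∀ x, (∀ y ∈ Y, y ∈ Icc x (x + 4 * r)) →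
    (cnt ρ Y : ℝ) * cnt r B ≤ K * cnt ρ B

/-- Single-scale control of a sum of products at scale `δ` passes to all scales and all
lengths: the translates of `Y` by well-separated points of `b₀ B`, and of those by a dense
`ρ`-piece of `b₀ B`, are essentially disjoint inside `b₀ B + sumProd B + b₀ B`. -/
lemma approxRing_of_sumset {δ M b₀ : ℝ} {B : Finset ℝ} (hδ : 0 < δ) (hb : b₀ ∈ B) (hb0 : b₀ ≠ 0)
    (habs : ∀ b ∈ B, |b| ≤ 1) (hdiam : ∀ b ∈ B, ∀ b' ∈ B, |b - b'| ≤ 1)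
    (hM : (cnt δ (B.image (b₀ * ·) + sumProd B + B.image (b₀ * ·)) : ℝ) ≤ M * cnt δ B) :
    ApproxRing δ ((5 / |b₀|) ^ 3 * 275 ^ 2 * M) B := by
  have hBne : B.Nonempty := ⟨b₀, hb⟩
  have hb1 : |b₀| ≤ 1 := habs _ hb
  have hbp : 0 < |b₀| := abs_pos.2 hb0
  have hd : (0 : ℝ) < cnt δ B := by exact_mod_cast cnt_pos hBne
  have hM0 : 0 ≤ M := by
    by_contra hneg
    push Not at hneg
    have : M * cnt δ B < 0 := mul_neg_of_neg_of_pos hneg hd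
    linarith [Nat.cast_nonneg (α := ℝ) (cnt δ (B.image (b₀ * ·) + sumProd B + B.image (b₀ * ·)))]
  set t := 5 / |b₀| with ht
  have ht1 : 1 ≤ t := by rw [ht, one_le_div hbp]; linarith
  have key : ∀ ρ r, δ ≤ ρ → ρ ≤ r → ∀ Y ⊆ sumProd B, ∀ x, (∀ y ∈ Y, y ∈ Icc x (x + 4 * r)) →
      (cnt ρ Y : ℝ) * cnt r B ≤ t ^ 2 * 275 ^ 2 * M * cnt ρ B := by
    intro ρ r hρ hr Y hY x hx
    have hρ0 : 0 < ρ := hδ.trans_le hρ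
    -- `C` is the densest piece of `B` of length `ρ`.
    obtain ⟨z, ⟨x₁, hx₁⟩, hz⟩ := exists_cell (δ := δ) (ρ := ρ) B hBne
    set C := B.filter (fun x => ⌊x / ρ⌋ = z) with hC
    set W := C.image (b₀ * ·) with hW
    have hCW : (cnt δ C : ℝ) ≤ t * cnt δ W := by
      have := cnt_le_dilate hδ hb0 hb1 C id 0
      simpa [hW] using this
    have hBb : (cnt r B : ℝ) ≤ t * cnt r (B.image (b₀ * ·)) := by
      have := cnt_le_dilate (hρ0.trans_le hr) hb0 hb1 B id 0
      simpa using this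
    have hWint : ∀ y ∈ W, y ∈ Icc (b₀ * x₁ - ρ) (b₀ * x₁ - ρ + 4 * ρ) := by
      intro y hy
      obtain ⟨c, hc, rfl⟩ := Finset.mem_image.1 hy
      have h1 := abs_sub_lt_of_floor hρ0
        ((Finset.mem_filter.1 hc).2.trans (Finset.mem_filter.1 hx₁).2.symm)
      have h2 : |b₀ * c - b₀ * x₁| ≤ ρ := by
        rw [← mul_sub, abs_mul]
        calc |b₀| * |c - x₁| ≤ 1 * ρ := by gcongr
          _ = ρ := one_mul _
      rw [_root_.abs_le] at h2
      exact ⟨by linarith [h2.1], by linarith [h2.2]⟩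
    have h1 := cnt_mul_cnt_le_cnt_add hρ0 hr (B.image (b₀ * ·)) Y hx
    have h2 := cnt_mul_cnt_le_cnt_add hδ hρ (B.image (b₀ * ·) + Y) W hWint
    have h3 : (cnt δ (B.image (b₀ * ·) + Y + W) : ℝ) ≤ M * cnt δ B := by
      refine le_trans ?_ hM
      have : B.image (b₀ * ·) + Y + W ⊆ B.image (b₀ * ·) + sumProd B + B.image (b₀ * ·) :=
        Finset.add_subset_add (Finset.add_subset_add_left hY)
          (Finset.image_subset_image (Finset.filter_subset _ _))
      exact_mod_cast cnt_mono this
    have hz' : (cnt δ B : ℝ) ≤ cnt ρ B * cnt δ C := by exact_mod_cast hz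
    set a : ℝ := ((cnt ρ Y : ℕ) : ℝ)
    set b : ℝ := ((cnt r B : ℕ) : ℝ)
    set n : ℝ := ((cnt ρ B : ℕ) : ℝ)
    set d : ℝ := ((cnt δ B : ℕ) : ℝ)
    set m : ℝ := ((cnt δ C : ℕ) : ℝ)
    set w : ℝ := ((cnt δ W : ℕ) : ℝ)
    set b' : ℝ := ((cnt r (B.image (b₀ * ·)) : ℕ) : ℝ)
    set q : ℝ := ((cnt ρ (B.image (b₀ * ·) + Y) : ℕ) : ℝ)
    have ha : 0 ≤ a := Nat.cast_nonneg _
    have hn : 0 ≤ n := Nat.cast_nonneg _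
    have hw : 0 ≤ w := Nat.cast_nonneg _
    have hb'0 : 0 ≤ b' := Nat.cast_nonneg _
    have h4 : (a * b) * d ≤ (t ^ 2 * 275 ^ 2 * M * n) * d := by
      calc (a * b) * d ≤ (a * (t * b')) * (n * (t * w)) := by gcongr; exact hz'.trans (by gcongr)
        _ = t ^ 2 * n * ((b' * a) * w) := by ring
        _ ≤ t ^ 2 * n * ((275 * q) * w) := by gcongr
        _ = t ^ 2 * n * 275 * (q * w) := by ring
        _ ≤ t ^ 2 * n * 275 * (275 * (M * d)) :=
          mul_le_mul_of_nonneg_left (h2.trans (by gcongr)) (by positivity)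
        _ = _ := by ring
    exact le_of_mul_le_mul_right h4 hd
  refine ⟨hδ, hBne, habs, hdiam, ?_, ?_⟩
  · intro ρ r hρ hr Y hY x hx
    refine (key ρ r hρ hr Y hY x hx).trans ?_
    gcongr
    norm_num
  · intro ρ r hρ hr Y hY x hx
    have hρ0 : 0 < ρ := hδ.trans_le hρ
    -- A piece of `B` becomes one of `sumProd B` after multiplication by `b₀`; the translation
    -- by `b₀ * b₀` balances the number of terms of each sign.
    set Y' := Y.image (fun y => b₀ * y + (- (b₀ * b₀))) with hY'
    have h1 := cnt_le_dilate hρ0 hb0 hb1 Y id (- (b₀ * b₀))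
    rw [Finset.image_id] at h1
    have hsub : Y' ⊆ sumProd B := by
      intro w hw
      obtain ⟨y, hy, rfl⟩ := Finset.mem_image.1 hw
      have hbb : b₀ * b₀ ∈ B * B := Finset.mul_mem_mul hb hb
      have := mem_sumProd (Finset.mul_mem_mul hb (hY hy)) hbb hbb hbb hbb hbb hbb hbb
      convert this using 1
      ring
    have hint : ∃ x', ∀ y ∈ Y', y ∈ Icc x' (x' + 4 * r) := by
      have h4r : 0 ≤ 4 * r := by linarith
      rcases le_or_gt 0 b₀ with h | h
      · rw [abs_of_nonneg h] at hb1
        refine ⟨b₀ * x - b₀ * b₀, fun w hw => ?_⟩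
        obtain ⟨y, hy, rfl⟩ := Finset.mem_image.1 hw
        have := hx y hy
        rw [mem_Icc] at this
        constructor <;> nlinarith [this.1, this.2]
      · rw [abs_of_neg h] at hb1
        refine ⟨b₀ * (x + 4 * r) - b₀ * b₀, fun w hw => ?_⟩
        obtain ⟨y, hy, rfl⟩ := Finset.mem_image.1 hw
        have := hx y hy
        rw [mem_Icc] at this
        constructor <;> nlinarith [this.1, this.2]
    obtain ⟨x', hx'⟩ := hint
    have h2 := key ρ r hρ hr Y' hsub x' hx'
    calc (cnt ρ Y : ℝ) * cnt r B ≤ (t * cnt ρ Y') * cnt r B := by gcongr; exact h1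
      _ = t * (cnt ρ Y' * cnt r B) := by ring
      _ ≤ t * (t ^ 2 * 275 ^ 2 * M * cnt ρ B) := by gcongr
      _ = _ := by ring

/-! ### Quotients of differences -/

lemma exists_Icc_of_diam (Y : Finset ℝ) {l : ℝ} (h : ∀ y ∈ Y, ∀ y' ∈ Y, |y - y'| ≤ l) :
    ∃ x, ∀ y ∈ Y, y ∈ Icc x (x + l) := by
  rcases Y.eq_empty_or_nonempty with rfl | hne
  · exact ⟨0, by simp⟩
  · refine ⟨Y.min' hne, fun y hy => ⟨Y.min'_le y hy, ?_⟩⟩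
    have := (abs_le.1 (h y hy _ (Y.min'_mem hne))).2
    linarith

/-- A set `Q ∋ 0` that is stable up to `η` under `x ↦ x/2` and `x ↦ (x+1)/2` is dense in `[0,1]`
up to `3η`. -/
lemma gap_or_dense (Q : Set ℝ) (h0 : (0 : ℝ) ∈ Q) {η : ℝ} (hη : 0 < η) :
    (∃ q ∈ Q, ∃ e : ℝ, (e = 0 ∨ e = 1) ∧ ∀ q' ∈ Q, η < |(q + e) / 2 - q'|) ∨
      ∀ x ∈ Icc (0 : ℝ) 1, ∃ q ∈ Q, |x - q| ≤ 3 * η := by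
  by_contra! hcon
  obtain ⟨hst, x, hx, hfar⟩ := hcon
  have key : ∀ n : ℕ, ∀ x ∈ Icc (0 : ℝ) 1, ∃ q ∈ Q, |x - q| ≤ 2 * η + (1 / 2) ^ n := by
    intro n
    induction n with
    | zero =>
      intro x hx
      refine ⟨0, h0, ?_⟩
      rw [mem_Icc] at hx
      rw [abs_le]; constructor <;> norm_num <;> linarith [hx.1, hx.2]
    | succ n ih =>
      intro x hx
      rw [mem_Icc] at hx
      have : ∃ e : ℝ, (e = 0 ∨ e = 1) ∧ 2 * x - e ∈ Icc (0 : ℝ) 1 := by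
        rcases le_total x (1 / 2) with h | h
        · exact ⟨0, Or.inl rfl, by constructor <;> linarith⟩
        · exact ⟨1, Or.inr rfl, by constructor <;> linarith⟩
      obtain ⟨e, he, hmem⟩ := this
      obtain ⟨q, hq, hqx⟩ := ih _ hmem
      obtain ⟨q', hq', hqq⟩ := hst q hq e he
      refine ⟨q', hq', ?_⟩
      rw [abs_le] at hqx hqq ⊢
      rw [pow_succ]
      constructor <;> linarith [hqx.1, hqx.2, hqq.1, hqq.2]
  obtain ⟨n, hn⟩ := exists_pow_lt_of_lt_one hη (show (1 / 2 : ℝ) < 1 by norm_num)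
  obtain ⟨q, hq, hqx⟩ := key n x hx
  linarith [hfar q hq]

/-- The quotients in `[0,1]` of differences of `B` with denominator at least `r₀`. -/
def quotSet (r₀ : ℝ) (B : Finset ℝ) : Set ℝ :=
  {q | q ∈ Icc (0 : ℝ) 1 ∧ ∃ a ∈ B, ∃ b ∈ B, ∃ c ∈ B, ∃ d ∈ B, r₀ ≤ |c - d| ∧
    q * (c - d) = a - b}

/-- A point of `[0,1]` is at least as close to `quotSet r₀ B` as to any quotient of
differences with denominator at least `r₀`, since `0` and `1` are themselves quotients. -/
lemma exists_near_quotSet {r₀ t η : ℝ} {B : Finset ℝ} (hr₀ : 0 < r₀) (ht : t ∈ Icc (0 : ℝ) 1)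
    {a b c d : ℝ} (ha : a ∈ B) (hb : b ∈ B) (hc : c ∈ B) (hd : d ∈ B) (hcd : r₀ ≤ |c - d|)
    (h : |t * (c - d) - (a - b)| ≤ η * r₀) : ∃ q ∈ quotSet r₀ B, |t - q| ≤ η := by
  have hne : c - d ≠ 0 := by
    intro h0; rw [h0, abs_zero] at hcd; linarith
  have hpos : 0 < |c - d| := abs_pos.2 hne
  have hη : 0 ≤ η := by
    by_contra! hneg
    have := mul_neg_of_neg_of_pos hneg hr₀
    linarith [abs_nonneg (t * (c - d) - (a - b))]
  have hclose : |t - (a - b) / (c - d)| ≤ η := by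
    have : t - (a - b) / (c - d) = (t * (c - d) - (a - b)) / (c - d) := by field_simp
    rw [this, abs_div, div_le_iff₀ hpos]
    exact h.trans (by gcongr)
  rw [mem_Icc] at ht
  rw [abs_le] at hclose
  rcases lt_or_ge ((a - b) / (c - d)) 0 with h1 | h1
  · refine ⟨0, ⟨by simp, a, ha, a, ha, c, hc, d, hd, hcd, by simp⟩, ?_⟩
    rw [abs_le]; constructor <;> linarith [ht.1, hclose.2]
  rcases lt_or_ge 1 ((a - b) / (c - d)) with h2 | h2
  · refine ⟨1, ⟨by simp, c, hc, d, hd, c, hc, d, hd, hcd, by simp⟩, ?_⟩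
    rw [abs_le]; constructor <;> linarith [ht.2, hclose.1]
  · exact ⟨_, ⟨⟨h1, h2⟩, a, ha, b, hb, c, hc, d, hd, hcd, by field_simp⟩, abs_le.2 hclose⟩

/-- The set `B + tB`. -/
noncomputable def sumDil (B : Finset ℝ) (t : ℝ) : Finset ℝ :=
  (B ×ˢ B).image (fun p => p.1 + t * p.2)

/-- If `t` is `η`-far from all quotients then `B + tB` is essentially a direct sum. -/
lemma cnt_mul_cnt_le_of_gap {r₀ t η ρ : ℝ} {B : Finset ℝ} (hr₀ : 0 < r₀)
    (ht : t ∈ Icc (0 : ℝ) 1) (hgap : ∀ q ∈ quotSet r₀ B, η < |t - q|) (hρ : 0 < ρ)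
    (hρη : ρ ≤ η * r₀) : (cnt ρ B : ℝ) * cnt r₀ B ≤ 25 * cnt ρ (sumDil B t) := by
  obtain ⟨P, hPB, hPs, hPc⟩ := exists_separated hρ B
  obtain ⟨Q, hQB, hQs, hQc⟩ := exists_separated hr₀ B
  have h1 : (P ×ˢ Q).card ≤ cnt ρ ((P ×ˢ Q).image (fun p => p.1 + t * p.2)) := by
    refine card_le_cnt_image _ _ hρ ?_
    rintro ⟨p, y⟩ hp ⟨p', y'⟩ hp' h
    rw [Finset.mem_product] at hp hp'
    simp only at hp hp' h
    have hyy : y = y' := by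
      by_contra hne
      obtain ⟨q, hq, hqt⟩ := exists_near_quotSet hr₀ ht (hPB hp'.1) (hPB hp.1) (hQB hp.2)
        (hQB hp'.2) (hQs y hp.2 y' hp'.2 hne) (η := η) (by
          refine le_trans (le_of_eq ?_) (h.le.trans hρη)
          congr 1; ring)
      linarith [hgap q hq]
    subst hyy
    have hpp : p = p' := by
      by_contra hne
      have := hPs p hp.1 p' hp'.1 hne
      have e : p + t * y - (p' + t * y) = p - p' := by ring
      rw [e] at h
      linarith
    rw [hpp]
  have h2 : cnt ρ ((P ×ˢ Q).image (fun p => p.1 + t * p.2)) ≤ cnt ρ (sumDil B t) :=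
    cnt_mono (Finset.image_subset_image (Finset.product_subset_product hPB hQB))
  rw [Finset.card_product] at h1
  have h5 : cnt ρ B * cnt r₀ B ≤ 25 * cnt ρ (sumDil B t) := by
    calc _ ≤ (5 * P.card) * (5 * Q.card) := Nat.mul_le_mul hPc hQc
      _ = 25 * (P.card * Q.card) := by ring
      _ ≤ _ := by gcongr; exact h1.trans h2
  exact_mod_cast h5

/-- If `2t` is a quotient of differences, or one more than that, then `2(c-d)(B + tB)` consists
of sums of products, so that the approximate ring structure bounds `B + tB`. -/
lemma cnt_sumDil_le {δ K : ℝ} {B : Finset ℝ} (hB : ApproxRing δ K B) {a b c d e q ρ : ℝ}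
    (ha : a ∈ B) (hb : b ∈ B) (hc : c ∈ B) (hd : d ∈ B) (hcd : 0 < |c - d|)
    (hq : q * (c - d) = a - b) (hq01 : q ∈ Icc (0 : ℝ) 1) (he : e = 0 ∨ e = 1)
    (hρ0 : 0 < ρ) (hρ1 : ρ ≤ 1) (hρ : δ ≤ ρ * |c - d|) :
    (cnt ρ (sumDil B ((q + e) / 2)) : ℝ) * cnt |c - d| B ≤ 3 * K * cnt (ρ * |c - d|) B := by
  set r := |c - d| with hr
  set t := (q + e) / 2 with ht
  rw [mem_Icc] at hq01
  have ht01 : 0 ≤ t ∧ t ≤ 1 := by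
    rcases he with rfl | rfl <;> constructor <;> linarith [hq01.1, hq01.2]
  set Y := (B ×ˢ B).image (fun p => 2 * (c - d) * (p.1 + t * p.2)) with hY
  have hYs : Y ⊆ sumProd B := by
    intro w hw
    obtain ⟨⟨x, y⟩, hp, rfl⟩ := Finset.mem_image.1 hw
    rw [Finset.mem_product] at hp
    have m := fun {u v : ℝ} (hu : u ∈ B) (hv : v ∈ B) => Finset.mul_mem_mul hu hv
    rcases he with rfl | rfl
    · have := mem_sumProd (m hc hp.1) (m hc hp.1) (m ha hp.2) (m ha ha)
        (m hd hp.1) (m hd hp.1) (m hb hp.2) (m ha ha)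
      convert this using 1
      simp only [ht]
      linear_combination y * hq
    · have := mem_sumProd (m hc hp.1) (m hc hp.1) (m ha hp.2) (m hc hp.2)
        (m hd hp.1) (m hd hp.1) (m hb hp.2) (m hd hp.2)
      convert this using 1
      simp only [ht]
      linear_combination y * hq
  obtain ⟨x, hx⟩ := exists_Icc_of_diam Y (l := 4 * r) (by
    intro y hy y' hy'
    obtain ⟨⟨x, y⟩, hp, rfl⟩ := Finset.mem_image.1 hy
    obtain ⟨⟨x', y'⟩, hp', rfl⟩ := Finset.mem_image.1 hy'
    rw [Finset.mem_product] at hp hp'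
    have h1 := hB.diam x hp.1 x' hp'.1
    have h2 := hB.diam y hp.2 y' hp'.2
    rw [← mul_sub, abs_mul, abs_mul, ← hr, abs_two]
    have h3 : |x + t * y - (x' + t * y')| ≤ 2 := by
      have : x + t * y - (x' + t * y') = (x - x') + t * (y - y') := by ring
      rw [this]
      refine (abs_add_le _ _).trans ?_
      rw [abs_mul, abs_of_nonneg ht01.1]
      have : t * |y - y'| ≤ 1 * 1 := by gcongr; exact ht01.2
      linarith
    simp only at h3 ⊢
    nlinarith)
  have hrpos : 0 < ρ * r := by positivity
  have h1 := hB.ring (ρ * r) r hρ (by nlinarith) Y hYs x hx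
  have h2 : cnt ρ (sumDil B t) ≤ 3 * cnt (ρ * r) Y := by
    have := cnt_image_le_cnt_image (B ×ˢ B) (fun p : ℝ × ℝ => p.1 + t * p.2)
      (fun p => 2 * (c - d) * (p.1 + t * p.2)) hρ0 hrpos 1 (by
        intro p _ p' _ h
        rw [← mul_sub, abs_mul, abs_mul, ← hr, abs_two] at h
        push_cast
        have : r * |p.1 + t * p.2 - (p'.1 + t * p'.2)| ≤ r * ρ := by
          nlinarith [abs_nonneg (p.1 + t * p.2 - (p'.1 + t * p'.2))]
        have := le_of_mul_le_mul_left this hcd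
        linarith)
    exact this
  have h2' : (cnt ρ (sumDil B t) : ℝ) ≤ 3 * cnt (ρ * r) Y := by exact_mod_cast h2
  calc _ ≤ (3 * cnt (ρ * r) Y : ℝ) * cnt r B := by gcongr
    _ = 3 * (cnt (ρ * r) Y * cnt r B) := by ring
    _ ≤ 3 * (K * cnt (ρ * r) B) := by gcongr
    _ = _ := by ring

/-- Either the quotients of differences leave a gap, in which case `B` grows from scale `ρ` to
scale `ρ r` by more than its own size, or all sums `B + xB` with `x ∈ [0,1]` are small. -/
lemma quot_dichotomy {δ K r₀ η : ℝ} {B : Finset ℝ} (hB : ApproxRing δ K B) (hr₀ : 0 < r₀)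
    (hη : 0 < η) (hη1 : η * r₀ ≤ 1) (hη' : η ≤ 1) (hδη : δ ≤ η * r₀)
    (hex : ∃ c ∈ B, ∃ d ∈ B, r₀ ≤ |c - d|) :
    (∃ r, r₀ ≤ r ∧ r ≤ 1 ∧ ∀ ρ, 0 < ρ → ρ ≤ η * r₀ → δ ≤ ρ * r →
      (cnt ρ B : ℝ) * cnt r₀ B * cnt r B ≤ 75 * K * cnt (ρ * r) B) ∨
    (∀ x ∈ Icc (0 : ℝ) 1, (cnt η (sumDil B x) : ℝ) ≤ 45 * K / r₀ * cnt η B) := by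
  obtain ⟨c₀, hc₀, d₀, hd₀, h₀⟩ := hex
  have hK : 0 ≤ K := by
    have h1 := hB.ring 1 1 (by linarith) le_rfl ∅ (by simp) 0 (by simp)
    have h2 : (0 : ℝ) < cnt 1 B := by exact_mod_cast cnt_pos hB.nonempty
    simp only [cnt, Finset.image_empty, Finset.card_empty, Nat.cast_zero, zero_mul] at h1 h2
    exact nonneg_of_mul_nonneg_left h1 h2
  rcases gap_or_dense (quotSet r₀ B)
    ⟨by simp, c₀, hc₀, c₀, hc₀, c₀, hc₀, d₀, hd₀, h₀, by simp⟩
    hη with hgap | hdense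
  · left
    obtain ⟨q, ⟨hq01, a, ha, b, hb, c, hc, d, hd, hcd, hq⟩, e, he, hfar⟩ := hgap
    refine ⟨|c - d|, hcd, hB.diam c hc d hd, ?_⟩
    intro ρ hρ hρη hδρ
    have ht : (q + e) / 2 ∈ Icc (0 : ℝ) 1 := by
      rw [mem_Icc] at hq01 ⊢
      rcases he with rfl | rfl <;> constructor <;> linarith [hq01.1, hq01.2]
    have h1 := cnt_mul_cnt_le_of_gap hr₀ ht hfar hρ hρη
    have h2 := cnt_sumDil_le hB ha hb hc hd (hr₀.trans_le hcd) hq hq01 he hρ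
      (hρη.trans hη1) hδρ
    calc _ ≤ (25 * cnt ρ (sumDil B ((q + e) / 2)) : ℝ) * cnt |c - d| B := by gcongr
      _ = 25 * (cnt ρ (sumDil B ((q + e) / 2)) * cnt |c - d| B) := by ring
      _ ≤ 25 * (3 * K * cnt (ρ * |c - d|) B) := by gcongr
      _ = _ := by ring
  · right
    intro x hx
    obtain ⟨q, ⟨hq01, a, ha, b, hb, c, hc, d, hd, hcd, hq⟩, hxq⟩ := hdense x hx
    set r := |c - d| with hr
    have hrp : 0 < r := hr₀.trans_le hcd
    have hr1 : r ≤ 1 := hB.diam c hc d hd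
    -- `(c - d) (B + q B)` consists of sums of products of `B`, because `q (c - d) = a - b`.
    set Y := (B ×ˢ B).image (fun p => (c - d) * (p.1 + q * p.2)) with hY
    have hYs : Y ⊆ sumProd B := by
      intro w hw
      obtain ⟨⟨x, y⟩, hp, rfl⟩ := Finset.mem_image.1 hw
      rw [Finset.mem_product] at hp
      have m := fun {u v : ℝ} (hu : u ∈ B) (hv : v ∈ B) => Finset.mul_mem_mul hu hv
      have := mem_sumProd (m hc hp.1) (m ha hp.2) (m ha ha) (m ha ha)
        (m hd hp.1) (m hb hp.2) (m ha ha) (m ha ha)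
      convert this using 1
      simp only
      linear_combination y * hq
    have hdiff : ∀ p ∈ B ×ˢ B, ∀ p' ∈ B ×ˢ B, |p.1 + q * p.2 - (p'.1 + q * p'.2)| ≤ 2 := by
      intro p hp p' hp'
      rw [Finset.mem_product] at hp hp'
      have h1 := hB.diam p.1 hp.1 p'.1 hp'.1
      have h2 := hB.diam p.2 hp.2 p'.2 hp'.2
      have : p.1 + q * p.2 - (p'.1 + q * p'.2) = (p.1 - p'.1) + q * (p.2 - p'.2) := by ring
      rw [this]
      refine (abs_add_le _ _).trans ?_
      rw [abs_mul, abs_of_nonneg hq01.1]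
      have : q * |p.2 - p'.2| ≤ 1 * 1 := by gcongr; exact hq01.2
      linarith
    obtain ⟨x₁, hx₁⟩ := exists_Icc_of_diam Y (l := 4 * r) (by
      intro y hy y' hy'
      obtain ⟨p, hp, rfl⟩ := Finset.mem_image.1 hy
      obtain ⟨p', hp', rfl⟩ := Finset.mem_image.1 hy'
      rw [← mul_sub, abs_mul, ← hr]
      nlinarith [hdiff p hp p' hp'])
    have hηr : 0 < η * r := by positivity
    have h1 := hB.ring (η * r) r (hδη.trans (by gcongr)) (by nlinarith) Y hYs x₁ hx₁
    have h2 : cnt η (sumDil B x) ≤ (2 * 4 + 1) * cnt (η * r) Y := by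
      refine cnt_image_le_cnt_image (B ×ˢ B) (fun p : ℝ × ℝ => p.1 + x * p.2)
        (fun p => (c - d) * (p.1 + q * p.2)) hη hηr 4 ?_
      intro p hp p' hp' h
      rw [← mul_sub, abs_mul, ← hr, mul_comm η r] at h
      have h3 := lt_of_mul_lt_mul_left h hrp.le
      rw [Finset.mem_product] at hp hp'
      have h4 := hB.diam p.2 hp.2 p'.2 hp'.2
      have : p.1 + x * p.2 - (p'.1 + x * p'.2) =
        (p.1 + q * p.2 - (p'.1 + q * p'.2)) + (x - q) * (p.2 - p'.2) := by ring
      rw [this]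
      refine (abs_add_le _ _).trans ?_
      rw [abs_mul]
      have : |x - q| * |p.2 - p'.2| ≤ 3 * η * 1 := by gcongr
      push_cast
      linarith
    have h2' : (cnt η (sumDil B x) : ℝ) ≤ 9 * cnt (η * r) Y := by exact_mod_cast h2
    have h3 : (1 : ℝ) ≤ cnt r B := by exact_mod_cast cnt_pos hB.nonempty
    have h4 := cnt_le_div hηr (show η * r ≤ η by nlinarith) B
    have h5 : η / (η * r) ≤ 1 / r₀ := by
      rw [div_le_div_iff₀ hηr hr₀]; nlinarith
    calc (cnt η (sumDil B x) : ℝ) ≤ 9 * (cnt (η * r) Y * 1) := by linarith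
      _ ≤ 9 * (cnt (η * r) Y * cnt r B) := by gcongr
      _ ≤ 9 * (K * cnt (η * r) B) := by gcongr
      _ ≤ 9 * (K * (5 * (η / (η * r)) * cnt η B)) := by gcongr
      _ ≤ 9 * (K * (5 * (1 / r₀) * cnt η B)) := by gcongr
      _ = _ := by ring

/-! ### Collisions in sums of dilates -/

/-- Cauchy–Schwarz: a map with few values has many collisions. -/
lemma card_sq_le_card_image_mul {α : Type*} (X : Finset α) (φ : α → ℤ) :
    X.card ^ 2 ≤ (X.image φ).card * ((X ×ˢ X).filter (fun p => φ p.1 = φ p.2)).card := by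
  classical
  have h1 := Finset.card_eq_sum_card_image φ X
  have h2 : ((X ×ˢ X).filter (fun p => φ p.1 = φ p.2)).card =
      ∑ z ∈ X.image φ, (X.filter (fun x => φ x = z)).card ^ 2 := by
    rw [Finset.card_eq_sum_card_fiberwise (f := fun p => φ p.1) (t := X.image φ)]
    · refine Finset.sum_congr rfl fun z _ => ?_
      rw [sq, ← Finset.card_product]
      congr 1
      ext ⟨x, y⟩
      simp only [Finset.mem_filter, Finset.mem_product]
      constructor
      · rintro ⟨⟨⟨hx, hy⟩, h⟩, hz⟩
        exact ⟨⟨hx, hz⟩, hy, h ▸ hz⟩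
      · rintro ⟨⟨hx, hz⟩, hy, hz'⟩
        exact ⟨⟨⟨hx, hy⟩, hz.trans hz'.symm⟩, hz⟩
    · intro p hp
      have := (Finset.mem_filter.1 hp).1
      rw [Finset.mem_product] at this
      exact Finset.mem_coe.2 (Finset.mem_image_of_mem _ this.1)
  rw [h2]
  conv_lhs => rw [h1]
  exact sq_sum_le_card_mul_sum_sq

lemma card_le_of_separated {η l : ℝ} (hη : 0 < η) (hl : η ≤ l) (P : Finset ℝ)
    (hs : ∀ p ∈ P, ∀ q ∈ P, p ≠ q → η ≤ |p - q|) (hd : ∀ p ∈ P, ∀ q ∈ P, |p - q| ≤ l) :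
    (P.card : ℝ) ≤ 5 * (l / η) := by
  obtain ⟨k, hk, hk'⟩ := exists_nat_five ((one_le_div hη).2 hl)
  have h1 : P.card ≤ cnt η (P.image id) := card_le_cnt_image P id hη (by
    intro x hx x' hx' h
    by_contra hne
    simp only [id] at h
    linarith [hs x hx x' hx' hne])
  have h2 := cnt_image_le P (fun _ => ()) id hη k (by
    intro x hx x' hx' _
    exact (hd x hx x' hx').trans ((div_le_iff₀ hη).1 hk))
  have h3 : (P.image (fun _ => ())).card ≤ 1 := Finset.card_le_one_of_subsingleton _
  have h4 : P.card ≤ (2 * k + 1) := h1.trans (h2.trans (by nlinarith))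
  have h5 : (P.card : ℝ) ≤ 2 * k + 1 := by exact_mod_cast h4
  linarith

/-- The number of directions `t_j = j / M`, `j < M`, for which two distinct lines through
`(a, b)` and `(a', b')` collide at scale `η` is `O(1 / |b - b'|)`. -/
lemma card_directions_le {η a b a' b' : ℝ} {M : ℕ} (hη : 0 < η) (hM : (M : ℝ) ≤ 2 / η)
    (hM0 : 0 < M) (hb : b ≠ b') (hb1 : |b - b'| ≤ 1) :
    (((Finset.range M).filter (fun j : ℕ => ⌊(a + (j / M : ℝ) * b) / η⌋ =
      ⌊(a' + (j / M : ℝ) * b') / η⌋)).card : ℝ) ≤ 20 / |b - b'| := by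
  set J := (Finset.range M).filter (fun j : ℕ => ⌊(a + (j / M : ℝ) * b) / η⌋ =
      ⌊(a' + (j / M : ℝ) * b') / η⌋) with hJ
  have hs : 0 < |b - b'| := abs_pos.2 (sub_ne_zero.2 hb)
  have hM' : (0 : ℝ) < M := by exact_mod_cast hM0
  obtain ⟨k, hk, hk'⟩ := exists_nat_five (x := 4 / |b - b'|) (by
    rw [one_le_div hs]; linarith)
  have h := card_image_le_mul J (fun _ => ()) (fun j => (j : ℤ)) k (by
    intro i hi j hj _
    have h1 := abs_sub_lt_of_floor hη (Finset.mem_filter.1 hi).2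
    have h2 := abs_sub_lt_of_floor hη (Finset.mem_filter.1 hj).2
    have h3 : |(i / M - j / M : ℝ)| * |b - b'| ≤ 2 * η := by
      rw [← abs_mul]
      have : ((i : ℝ) / M - j / M) * (b - b') = (a + (i / M : ℝ) * b - (a' + (i / M : ℝ) * b')) -
        (a + (j / M : ℝ) * b - (a' + (j / M : ℝ) * b')) := by ring
      rw [this]
      refine (abs_sub _ _).trans ?_
      linarith
    rw [← sub_div, abs_div, abs_of_pos hM', div_mul_eq_mul_div, div_le_iff₀ hM'] at h3
    have h4 : |(i : ℝ) - j| ≤ 4 / |b - b'| := by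
      rw [le_div_iff₀ hs]
      refine h3.trans ?_
      calc 2 * η * M ≤ 2 * η * (2 / η) := by gcongr
        _ = 4 := by field_simp; norm_num
    have h5 : |(i : ℝ) - j| ≤ k := h4.trans hk
    exact_mod_cast h5)
  rw [Finset.card_image_of_injective _ Nat.cast_injective] at h
  have h3 : (J.image (fun _ => ())).card ≤ 1 := Finset.card_le_one_of_subsingleton _
  have h4 : J.card ≤ (2 * k + 1) := h.trans (by nlinarith)
  have h5 : (J.card : ℝ) ≤ 2 * k + 1 := by exact_mod_cast h4
  calc (J.card : ℝ) ≤ _ := h5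
    _ ≤ _ := hk'
    _ = _ := by ring

/-- If `P + xP` has at most `W` cells for every `x ∈ [0,1]`, then averaging the number of
collisions over `x` shows that `P` is concentrated: `ν` bounds the number of points of `P` at
distance at most `s` from a given one. -/
lemma card_sq_le_of_sumDil {η s W ν : ℝ} {P : Finset ℝ} (hη : 0 < η) (hη1 : η ≤ 1) (hs0 : 0 < s)
    (hsep : ∀ p ∈ P, ∀ q ∈ P, p ≠ q → η ≤ |p - q|)
    (hdiam : ∀ p ∈ P, ∀ q ∈ P, |p - q| ≤ 1) (hne : P.Nonempty)
    (hν : ∀ b ∈ P, ((P.filter (fun b' => |b - b'| ≤ s)).card : ℝ) ≤ ν)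
    (hW : ∀ x ∈ Icc (0 : ℝ) 1, (cnt η (sumDil P x) : ℝ) ≤ W) :
    (P.card : ℝ) ^ 2 ≤ W * (402 * ν + 20 * η * (P.card : ℝ) ^ 2 / s) := by
  classical
  set N : ℝ := (P.card : ℝ) with hN
  have hN1 : 0 < N := by rw [hN]; exact_mod_cast hne.card_pos
  have hW0 : 0 ≤ W := (Nat.cast_nonneg _).trans (hW 0 (by simp))
  have hν1 : 1 ≤ ν := by
    obtain ⟨b, hb⟩ := hne
    refine le_trans ?_ (hν b hb)
    have : 0 < (P.filter (fun b' => |b - b'| ≤ s)).card :=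
      Finset.card_pos.2 ⟨b, Finset.mem_filter.2 ⟨hb, by simpa using hs0.le⟩⟩
    exact_mod_cast this
  set M : ℕ := ⌈1 / η⌉₊ with hMdef
  have h1η : 1 ≤ 1 / η := (one_le_div hη).2 hη1
  have hMl : 1 / η ≤ M := Nat.le_ceil _
  have hMu : (M : ℝ) ≤ 2 / η := by
    have := Nat.ceil_lt_add_one (a := 1 / η) (by linarith)
    have e : 2 / η = 1 / η + 1 / η := by ring
    rw [e]; linarith
  have hM0 : 0 < M := by
    have : (0 : ℝ) < M := by linarith
    exact_mod_cast this
  have hM0' : (0 : ℝ) < M := by exact_mod_cast hM0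
  let φ : ℕ → ℝ × ℝ → ℤ := fun j p => ⌊(p.1 + (j / M : ℝ) * p.2) / η⌋
  set X := P ×ˢ P with hX
  have hXc : (X.card : ℝ) = N ^ 2 := by rw [hX, Finset.card_product]; push_cast; ring
  have step1 : ∀ j ∈ Finset.range M, (X.card : ℝ) ^ 2 ≤
      W * ((X ×ˢ X).filter (fun p => φ j p.1 = φ j p.2)).card := by
    intro j hj
    have hj' : (j : ℝ) ≤ M := by exact_mod_cast (Finset.mem_range.1 hj).le
    have h1 := card_sq_le_card_image_mul X (φ j)
    have h2 := hW (j / M) ⟨by positivity, (div_le_one hM0').2 hj'⟩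
    have h3 : (X.image (φ j)).card = cnt η (sumDil P (j / M)) := by
      unfold cnt sumDil
      rw [Finset.image_image]
      rfl
    rw [h3] at h1
    calc (X.card : ℝ) ^ 2 ≤ cnt η (sumDil P (j / M)) *
          ((X ×ˢ X).filter (fun p => φ j p.1 = φ j p.2)).card := by exact_mod_cast h1
      _ ≤ _ := by gcongr
  have step2 : (M : ℝ) * N ^ 4 ≤ W * ∑ p ∈ X ×ˢ X,
      (((Finset.range M).filter (fun j => φ j p.1 = φ j p.2)).card : ℝ) := by
    have h1 := Finset.sum_le_sum step1
    rw [Finset.sum_const, Finset.card_range, nsmul_eq_mul, hXc, ← Finset.mul_sum] at h1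
    have h2 : ∑ j ∈ Finset.range M, (((X ×ˢ X).filter (fun p => φ j p.1 = φ j p.2)).card : ℝ) =
        ∑ p ∈ X ×ˢ X, (((Finset.range M).filter (fun j => φ j p.1 = φ j p.2)).card : ℝ) := by
      simp only [Finset.card_filter, Nat.cast_sum]
      rw [Finset.sum_comm]
    rw [h2] at h1
    calc (M : ℝ) * N ^ 4 = M * (N ^ 2) ^ 2 := by ring
      _ ≤ _ := h1
  -- The three terms are the diagonal, the pairs with `b` near `b'`, and the rest.
  let f₁ : ℝ → ℝ → ℝ → ℝ → ℝ := fun a b a' b' => if a' = a then (if b' = b then (M : ℝ) else 0) else 0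
  let f₂ : ℝ → ℝ → ℝ → ℝ → ℝ := fun a b a' b' =>
    if b ≠ b' ∧ |b - b'| ≤ s then (if |a - a'| ≤ 2 * |b - b'| then 20 / |b - b'| else 0) else 0
  have hf₁ : ∀ a b a' b', 0 ≤ f₁ a b a' b' := by
    intro a b a' b'; simp only [f₁]; split_ifs <;> simp
  have hf₂ : ∀ a b a' b', 0 ≤ f₂ a b a' b' := by
    intro a b a' b'; simp only [f₂]; split_ifs <;> positivity
  have step3 : ∀ a ∈ P, ∀ b ∈ P, ∀ a' ∈ P, ∀ b' ∈ P,
      (((Finset.range M).filter (fun j => φ j (a, b) = φ j (a', b'))).card : ℝ) ≤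
        f₁ a b a' b' + f₂ a b a' b' + 20 / s := by
    intro a ha b hb a' ha' b' hb'
    have hs' : 0 ≤ 20 / s := by positivity
    rcases Finset.eq_empty_or_nonempty
      ((Finset.range M).filter (fun j => φ j (a, b) = φ j (a', b'))) with hemp | ⟨j, hj⟩
    · rw [hemp, Finset.card_empty, Nat.cast_zero]
      linarith [hf₁ a b a' b', hf₂ a b a' b']
    have hj1 := abs_sub_lt_of_floor hη (Finset.mem_filter.1 hj).2
    simp only at hj1
    have hjM : (j : ℝ) ≤ M := by
      exact_mod_cast (Finset.mem_range.1 (Finset.mem_filter.1 hj).1).le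
    have hjt : (j / M : ℝ) ≤ 1 := (div_le_one hM0').2 hjM
    have hjt0 : 0 ≤ (j / M : ℝ) := by positivity
    by_cases hbb : b = b'
    · subst hbb
      have haa : a = a' := by
        by_contra hne'
        have := hsep a ha a' ha' hne'
        rw [add_sub_add_right_eq_sub] at hj1
        linarith
      subst haa
      have h1 : (((Finset.range M).filter (fun j => φ j (a, b) = φ j (a, b))).card : ℝ) ≤ M := by
        have := Finset.card_filter_le (Finset.range M) (fun j => φ j (a, b) = φ j (a, b))
        rw [Finset.card_range] at this
        exact_mod_cast this
      have h2 : f₁ a b a b = M := by simp [f₁]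
      have := hf₂ a b a b
      refine le_trans h1 ?_
      linarith
    · have hσ : η ≤ |b - b'| := hsep b hb b' hb' hbb
      have h1 := card_directions_le (a := a) (a' := a') hη hMu hM0 hbb (hdiam b hb b' hb')
      rcases le_or_gt |b - b'| s with hle | hgt
      · have haa : |a - a'| ≤ 2 * |b - b'| := by
          have : a - a' = (a + (j / M : ℝ) * b - (a' + (j / M : ℝ) * b')) -
            (j / M : ℝ) * (b - b') := by ring
          rw [this]
          refine (abs_sub _ _).trans ?_
          rw [abs_mul, abs_of_nonneg hjt0]
          have : (j / M : ℝ) * |b - b'| ≤ 1 * |b - b'| := by gcongr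
          linarith
        have h2 : f₂ a b a' b' = 20 / |b - b'| := by
          simp only [f₂]
          rw [if_pos ⟨hbb, hle⟩, if_pos haa]
        rw [h2]
        have := hf₁ a b a' b'
        refine le_trans h1 ?_
        linarith
      · have h2 : 20 / |b - b'| ≤ 20 / s := by gcongr
        have := hf₁ a b a' b'
        have := hf₂ a b a' b'
        refine le_trans h1 ?_
        linarith
  have step4 : ∀ a ∈ P, ∀ b ∈ P, ∑ a' ∈ P, ∑ b' ∈ P, (f₁ a b a' b' + f₂ a b a' b' + 20 / s) ≤
      M + 400 * ν / η + 20 * N ^ 2 / s := by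
    intro a ha b hb
    simp only [Finset.sum_add_distrib]
    have h1 : ∑ a' ∈ P, ∑ b' ∈ P, f₁ a b a' b' = M := by
      simp only [f₁]
      rw [Finset.sum_eq_single a, Finset.sum_eq_single b]
      · simp
      · intro b' _ h; simp [h]
      · intro h; exact absurd hb h
      · intro a' _ h; simp [h]
      · intro h; exact absurd ha h
    have h3 : ∑ a' ∈ P, ∑ b' ∈ P, (20 / s) = 20 * N ^ 2 / s := by
      simp only [Finset.sum_const, nsmul_eq_mul]
      ring
    have h2 : ∑ a' ∈ P, ∑ b' ∈ P, f₂ a b a' b' ≤ 400 * ν / η := by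
      rw [Finset.sum_comm]
      have hin : ∀ b' ∈ P, ∑ a' ∈ P, f₂ a b a' b' ≤ if |b - b'| ≤ s then 400 / η else 0 := by
        intro b' hb'
        by_cases hc : b ≠ b' ∧ |b - b'| ≤ s
        · simp only [f₂, if_pos hc, if_pos hc.2]
          rw [← Finset.sum_filter, Finset.sum_const, nsmul_eq_mul]
          have hσ : η ≤ |b - b'| := hsep b hb b' hb' hc.1
          have hσ0 : 0 < |b - b'| := hη.trans_le hσ
          have hcard := card_le_of_separated hη (l := 4 * |b - b'|) (by linarith)
            (P.filter (fun a' => |a - a'| ≤ 2 * |b - b'|))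
            (fun p hp q hq => hsep p (Finset.mem_filter.1 hp).1 q (Finset.mem_filter.1 hq).1)
            (fun p hp q hq => by
              have h1 := (Finset.mem_filter.1 hp).2
              have h2 := (Finset.mem_filter.1 hq).2
              have : p - q = (a - q) - (a - p) := by ring
              rw [this]
              refine (abs_sub _ _).trans ?_
              linarith)
          calc _ ≤ 5 * (4 * |b - b'| / η) * (20 / |b - b'|) := by gcongr
            _ = 400 / η := by field_simp; norm_num
        · simp only [f₂, if_neg hc, Finset.sum_const_zero]
          split_ifs <;> positivity
      calc _ ≤ ∑ b' ∈ P, (if |b - b'| ≤ s then 400 / η else 0) := Finset.sum_le_sum hin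
        _ = (P.filter (fun b' => |b - b'| ≤ s)).card * (400 / η) := by
            rw [← Finset.sum_filter, Finset.sum_const, nsmul_eq_mul]
        _ ≤ ν * (400 / η) := by gcongr; exact hν b hb
        _ = _ := by ring
    rw [h1, h3]
    linarith
  have step5 : ∑ p ∈ X ×ˢ X,
      (((Finset.range M).filter (fun j => φ j p.1 = φ j p.2)).card : ℝ) ≤
      N ^ 2 * (M + 400 * ν / η + 20 * N ^ 2 / s) := by
    rw [Finset.sum_product, hX, Finset.sum_product]
    have h1 : ∀ a ∈ P, ∀ b ∈ P, ∑ y ∈ P ×ˢ P,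
        (((Finset.range M).filter (fun j => φ j (a, b) = φ j y)).card : ℝ) ≤
          M + 400 * ν / η + 20 * N ^ 2 / s := by
      intro a ha b hb
      rw [Finset.sum_product]
      refine le_trans ?_ (step4 a ha b hb)
      exact Finset.sum_le_sum fun a' ha' => Finset.sum_le_sum fun b' hb' =>
        step3 a ha b hb a' ha' b' hb'
    refine (Finset.sum_le_sum fun a ha => Finset.sum_le_sum fun b hb => h1 a ha b hb).trans ?_
    simp only [Finset.sum_const, nsmul_eq_mul]
    apply le_of_eq
    ring
  have step6 : (M : ℝ) * N ^ 4 ≤ W * (N ^ 2 * (M + 400 * ν / η + 20 * N ^ 2 / s)) :=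
    step2.trans (by gcongr)
  have step7 : N ^ 2 * N ^ 2 ≤ N ^ 2 * (W * (402 * ν + 20 * η * N ^ 2 / s)) := by
    calc N ^ 2 * N ^ 2 = η * ((1 / η) * N ^ 4) := by field_simp
      _ ≤ η * (M * N ^ 4) := by gcongr
      _ ≤ η * (W * (N ^ 2 * (M + 400 * ν / η + 20 * N ^ 2 / s))) := by gcongr
      _ ≤ η * (W * (N ^ 2 * (2 / η + 400 * ν / η + 20 * N ^ 2 / s))) := by gcongr
      _ = N ^ 2 * (W * (2 + 400 * ν + 20 * η * N ^ 2 / s)) := by field_simp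
      _ ≤ _ := by gcongr; linarith
  exact le_of_mul_le_mul_left step7 (by positivity)

/-! ### Consequences of the approximate ring property -/

lemma ApproxRing.one_le {δ K : ℝ} {B : Finset ℝ} (hB : ApproxRing δ K B) : 1 ≤ K := by
  obtain ⟨b, hb⟩ := hB.nonempty
  have hδ := hB.delta_pos
  have h := hB.unif δ δ le_rfl le_rfl {b} (by simpa using hb) b (by
    intro y hy
    rw [Finset.mem_singleton] at hy
    subst hy
    exact ⟨le_rfl, by linarith⟩)
  have h1 : (1 : ℝ) ≤ cnt δ {b} := by exact_mod_cast cnt_pos (Finset.singleton_nonempty b)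
  have h2 : (0 : ℝ) < cnt δ B := by exact_mod_cast cnt_pos hB.nonempty
  have h3 : 1 * (cnt δ B : ℝ) ≤ K * cnt δ B := le_trans (by gcongr) h
  exact le_of_mul_le_mul_right h3 h2

lemma cnt_le_of_close {ρ : ℝ} (hρ : 0 < ρ) {X : Finset ℝ}
    (h : ∀ x ∈ X, ∀ y ∈ X, |x - y| ≤ ρ) : cnt ρ X ≤ 3 := by
  have h1 := cnt_image_le X (fun _ => (0 : ℕ)) id hρ 1 (by
    intro x hx y hy _
    simpa using h x hx y hy)
  rw [Finset.image_id] at h1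
  have h2 : (X.image (fun _ => (0 : ℕ))).card ≤ 1 := by
    refine (Finset.card_le_card (t := {0}) ?_).trans (by simp)
    intro x hx
    simp only [Finset.mem_image] at hx
    obtain ⟨_, _, rfl⟩ := hx
    simp
  calc cnt ρ X ≤ (2 * 1 + 1) * (X.image (fun _ => (0 : ℕ))).card := h1
    _ ≤ (2 * 1 + 1) * 1 := by gcongr
    _ = 3 := by norm_num

/-- Two points of `B` at distance `r` give superadditivity at the length `r`: the dilate
`(c - d) B` of `B` is a sum of products of `B` of diameter at most `r`. -/
lemma cnt_mul_cnt_le_of_pair {δ K ρ : ℝ} {B : Finset ℝ} (hB : ApproxRing δ K B) {c d : ℝ}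
    (hc : c ∈ B) (hd : d ∈ B) (hcd : c ≠ d) (hρ : 0 < ρ) (hρ1 : ρ ≤ 1)
    (hδ : δ ≤ ρ * |c - d|) :
    (cnt ρ B : ℝ) * cnt |c - d| B ≤ 3 * K * cnt (ρ * |c - d|) B := by
  have hr0 : 0 < |c - d| := abs_pos.2 (sub_ne_zero.2 hcd)
  set r := |c - d| with hr
  obtain ⟨b, hb⟩ := hB.nonempty
  set Y := B.image (fun x => (c - d) * x) with hY
  have hYs : Y ⊆ sumProd B := by
    intro y hy
    obtain ⟨x, hx, rfl⟩ := Finset.mem_image.1 hy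
    have hbb := Finset.mul_mem_mul hb hb
    have := mem_sumProd (Finset.mul_mem_mul hc hx) hbb hbb hbb
      (Finset.mul_mem_mul hd hx) hbb hbb hbb
    convert this using 1
    ring
  obtain ⟨x, hx⟩ := exists_Icc_of_diam Y (l := 4 * r) (by
    intro y hy y' hy'
    obtain ⟨p, hp, rfl⟩ := Finset.mem_image.1 hy
    obtain ⟨p', hp', rfl⟩ := Finset.mem_image.1 hy'
    rw [← mul_sub, abs_mul, ← hr]
    nlinarith [hB.diam p hp p' hp'])
  have h1 := hB.ring (ρ * r) r hδ (by nlinarith) Y hYs x hx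
  have h2 : cnt ρ (B.image id) ≤ (2 * 1 + 1) * cnt (ρ * r) Y := by
    refine cnt_image_le_cnt_image B id _ hρ (by positivity) 1 ?_
    intro x _ x' _ h
    rw [← mul_sub, abs_mul, ← hr, mul_comm ρ r] at h
    simpa using (lt_of_mul_lt_mul_left h hr0.le).le
  rw [Finset.image_id] at h2
  have h3 : (cnt ρ B : ℝ) ≤ 3 * cnt (ρ * r) Y := by exact_mod_cast h2
  calc (cnt ρ B : ℝ) * cnt r B ≤ (3 * cnt (ρ * r) Y) * cnt r B := by gcongr
    _ = 3 * (cnt (ρ * r) Y * cnt r B) := by ring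
    _ ≤ 3 * (K * cnt (ρ * r) B) := by gcongr
    _ = _ := by ring

/-- If the dilate sums `B + t B`, `0 ≤ t ≤ 1`, are all about as small as `B` at scale `η`, then
`B` is concentrated at scale `s` or nearly full at scale `η`. -/
lemma one_le_of_sumDil {δ K η s W : ℝ} {B : Finset ℝ} (hB : ApproxRing δ K B) (hδ : δ ≤ η)
    (hη1 : η ≤ 1) (hs : η ≤ s) (hW0 : 0 ≤ W)
    (hW : ∀ x ∈ Icc (0 : ℝ) 1, (cnt η (sumDil B x) : ℝ) ≤ W * cnt η B) :
    1 ≤ 25 * W * (402 * (K / cnt s B) + 20 * (η * cnt η B / s)) := by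
  have hη : 0 < η := hB.delta_pos.trans_le hδ
  have hs0 : 0 < s := hη.trans_le hs
  obtain ⟨P, hPB, hPs, hPc⟩ := exists_separated hη B
  have hV : (0 : ℝ) < cnt η B := by exact_mod_cast cnt_pos hB.nonempty
  have hS : (0 : ℝ) < cnt s B := by exact_mod_cast cnt_pos hB.nonempty
  set V : ℝ := (cnt η B : ℝ) with hVd
  have hPV : V ≤ 5 * P.card := by rw [hVd]; exact_mod_cast hPc
  have hP0 : (0 : ℝ) < P.card := by linarith
  have hne : P.Nonempty := Finset.card_pos.1 (by exact_mod_cast hP0)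
  have hcard : ∀ Q ⊆ P, Q.card ≤ cnt η Q := by
    intro Q hQ
    have := card_le_cnt_image Q id hη (by
      intro x hx x' hx' h
      by_contra hne
      exact absurd (hPs x (hQ hx) x' (hQ hx') hne) (not_le.2 h))
    simpa using this
  have hPV2 : (P.card : ℝ) ≤ V := by
    rw [hVd]; exact_mod_cast (hcard P (Finset.Subset.refl _)).trans (cnt_mono hPB)
  have key := card_sq_le_of_sumDil (W := W * V) (ν := K * V / cnt s B) hη hη1 hs0 hPs
    (fun p hp q hq => hB.diam p (hPB hp) q (hPB hq)) hne ?_ ?_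
  · have h1 : V ^ 2 / 25 ≤ (P.card : ℝ) ^ 2 := by
      have : V ^ 2 ≤ (5 * P.card) ^ 2 := by gcongr
      nlinarith
    have h2 : W * V * (402 * (K * V / cnt s B) + 20 * η * (P.card : ℝ) ^ 2 / s) ≤
        W * V * (402 * (K * V / cnt s B) + 20 * η * V ^ 2 / s) := by gcongr
    have h3 : V ^ 2 * 1 ≤
        V ^ 2 * (25 * W * (402 * (K / cnt s B) + 20 * (η * V / s))) := by
      have e : V ^ 2 * (25 * W * (402 * (K / cnt s B) + 20 * (η * V / s))) =
        25 * (W * V * (402 * (K * V / cnt s B) + 20 * η * V ^ 2 / s)) := by ring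
      rw [e]
      linarith
    exact le_of_mul_le_mul_left h3 (by positivity)
  · intro b hb
    have h1 : ((P.filter (fun b' => |b - b'| ≤ s)).card : ℝ) ≤
        cnt η (P.filter (fun b' => |b - b'| ≤ s)) := by
      exact_mod_cast hcard _ (Finset.filter_subset _ _)
    have h2 := hB.unif η s hδ hs (P.filter (fun b' => |b - b'| ≤ s))
      ((Finset.filter_subset _ _).trans hPB) (b - s) (by
        intro y hy
        have := abs_le.1 (Finset.mem_filter.1 hy).2
        exact ⟨by linarith, by linarith⟩)
    exact h1.trans ((le_div_iff₀ hS).2 h2)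
  · intro x hx
    refine le_trans ?_ (hW x hx)
    have : sumDil P x ⊆ sumDil B x :=
      Finset.image_subset_image (Finset.product_subset_product hPB hPB)
    exact_mod_cast cnt_mono this

/-! ### The scale profile of an approximate ring -/

/-- The constraints on the scale profile `f` of an approximate ring, where the covering number
at scale `δ ^ s` is written `δ ^ (-f s)` and the error `e` absorbs all constants: `f` is almost
monotone and `1`-Lipschitz, it grows at least like `κ s`, `f 1 ≤ σ`, and `f` is superadditive
with a step `τ` supplied either by the quotient dichotomy (`main`) or by a pair of points of
`B` (`pair`). -/
structure Profile (κ σ e : ℝ) (f : ℝ → ℝ) : Prop where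
  nonneg : ∀ s, 0 ≤ f s
  mono : ∀ u s, u ≤ s → f u ≤ f s + e
  lip : ∀ u s, u ≤ s → f s ≤ f u + (s - u) + e
  zero : f 0 ≤ e
  frost : ∀ s, 0 ≤ s → s ≤ 1 → κ * s - e ≤ f s
  one : f 1 ≤ σ
  main : ∀ τ₀ β, 0 < τ₀ → 0 < β → τ₀ + β ≤ 1 → e < f τ₀ →
    (∃ τ, 0 ≤ τ ∧ τ ≤ τ₀ ∧ ∀ u, τ₀ + β ≤ u → u + τ ≤ 1 → f u + f τ + f τ₀ ≤ f (u + τ) + e) ∨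
    (∀ v, 0 ≤ v → v ≤ β → f v ≤ τ₀ + e ∨ β - f β - v ≤ τ₀ + e)
  pair : ∀ α β, 0 ≤ α → α ≤ β → β ≤ 1 → α + e < f β →
    ∃ τ, α ≤ τ ∧ τ ≤ β ∧ ∀ u, 0 ≤ u → u + τ ≤ 1 → f u + f τ ≤ f (u + τ) + e

lemma exists_far {ρ : ℝ} (hρ : 0 < ρ) {X : Finset ℝ} (h : 3 < cnt ρ X) :
    ∃ c ∈ X, ∃ d ∈ X, ρ ≤ |c - d| := by
  by_contra! hcon
  exact absurd (cnt_le_of_close hρ fun x hx y hy => (hcon x hx y hy).le) (not_le.2 h)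

/-- The profile of an approximate ring, with error `e` large enough for `δ ^ (-e)` to absorb `K ^ 2`
and all numerical constants. -/
lemma ApproxRing.profile {δ K e κ σ : ℝ} {B : Finset ℝ} (hδ1 : δ < 1)
    (hB : ApproxRing δ K B) (hK : 10 ^ 6 * K ^ 2 ≤ δ ^ (-e))
    (hfrost : ∀ s, δ ≤ s → s ≤ 1 → δ ^ e * s ^ (-κ) ≤ cnt s B)
    (hσ : (cnt δ B : ℝ) ≤ δ ^ (-σ)) :
    Profile κ σ e (fun s => Real.log (cnt (δ ^ s) B) / Real.log (1 / δ)) := by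
  have hδ0 := hB.delta_pos
  have hK1 := hB.one_le
  have hK12 : K ≤ K ^ 2 := by nlinarith
  set L := Real.log (1 / δ) with hL
  have hL0 : 0 < L := Real.log_pos (by rw [one_div]; exact (one_lt_inv₀ hδ0).2 hδ1)
  have hlog : Real.log δ = -L := by rw [hL, one_div, Real.log_inv]; ring
  have hpow : ∀ s : ℝ, δ ^ s = Real.exp (-(L * s)) := by
    intro s
    rw [Real.rpow_def_of_pos hδ0, hlog]
    congr 1; ring
  have hpow0 : ∀ s : ℝ, 0 < δ ^ s := fun s => Real.rpow_pos_of_pos hδ0 s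
  have hanti : ∀ {s u : ℝ}, u ≤ s → δ ^ s ≤ δ ^ u := fun h =>
    Real.rpow_le_rpow_of_exponent_ge hδ0 hδ1.le h
  set f : ℝ → ℝ := fun s => Real.log (cnt (δ ^ s) B) / L with hf
  have hg1 : ∀ s : ℝ, (1 : ℝ) ≤ cnt (δ ^ s) B := fun s => by
    exact_mod_cast cnt_pos hB.nonempty
  have hg : ∀ s : ℝ, (cnt (δ ^ s) B : ℝ) = Real.exp (L * f s) := by
    intro s
    simp only [hf]
    rw [mul_div_cancel₀ _ hL0.ne', Real.exp_log (by linarith [hg1 s])]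
  have hC : 10 ^ 6 * K ^ 2 ≤ Real.exp (L * e) := by
    rw [hpow] at hK
    simpa using hK
  have hC6 : (10 : ℝ) ^ 6 ≤ Real.exp (L * e) := by nlinarith
  have cancel : ∀ {a b : ℝ}, Real.exp (L * a) ≤ Real.exp (L * b) → a ≤ b := by
    intro a b h
    exact le_of_mul_le_mul_left (Real.exp_le_exp.1 h) hL0
  -- lengths are powers of `δ`
  have hlen : ∀ {r : ℝ}, 0 < r → ∃ τ : ℝ, δ ^ τ = r := by
    intro r hr
    refine ⟨-(Real.log r) / L, ?_⟩
    rw [hpow, mul_div_cancel₀ _ hL0.ne', neg_neg, Real.exp_log hr]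
  have hlen2 : ∀ {u v : ℝ}, δ ^ u ≤ δ ^ v → v ≤ u := by
    intro u v h
    exact (Real.rpow_le_rpow_left_iff_of_base_lt_one hδ0 hδ1).1 h
  have hlip : ∀ u s : ℝ, u ≤ s →
      (cnt (δ ^ s) B : ℝ) ≤ 5 * Real.exp (L * (s - u)) * cnt (δ ^ u) B := by
    intro u s h
    have := cnt_le_div (hpow0 s) (hanti h) B
    rw [← Real.rpow_sub hδ0, hpow (u - s), show -(L * (u - s)) = L * (s - u) by ring] at this
    exact this
  have hzero : (cnt (δ ^ (0 : ℝ)) B : ℝ) ≤ 3 := by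
    rw [Real.rpow_zero]
    exact_mod_cast cnt_le_of_close one_pos hB.diam
  refine ⟨?_, ?_, ?_, ?_, ?_, ?_, ?_, ?_⟩
  · intro s
    exact div_nonneg (Real.log_nonneg (hg1 s)) hL0.le
  · intro u s h
    apply cancel
    have h1 : (cnt (δ ^ u) B : ℝ) ≤ 3 * cnt (δ ^ s) B := by
      exact_mod_cast cnt_le_three (hpow0 s) (hanti h) B
    rw [mul_add, Real.exp_add, ← hg, ← hg]
    nlinarith [hg1 s]
  · intro u s h
    apply cancel
    have h1 := hlip u s h
    rw [mul_add, mul_add, Real.exp_add, Real.exp_add, ← hg, ← hg]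
    have h2 : 0 < Real.exp (L * (s - u)) := Real.exp_pos _
    calc (cnt (δ ^ s) B : ℝ) ≤ 5 * Real.exp (L * (s - u)) * cnt (δ ^ u) B := h1
      _ ≤ Real.exp (L * e) * Real.exp (L * (s - u)) * cnt (δ ^ u) B := by gcongr; linarith
      _ = _ := by ring
  · apply cancel
    rw [← hg]
    linarith
  · intro s hs0 hs1
    apply cancel
    have h1 := hfrost (δ ^ s) (by simpa using hanti hs1) (by simpa using hanti hs0)
    rw [← Real.rpow_mul hδ0.le, ← Real.rpow_add hδ0, hpow, hg] at h1
    convert h1 using 2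
    ring
  · apply cancel
    rw [← hg, Real.rpow_one]
    rw [hpow] at hσ
    convert hσ using 2
    ring
  · intro τ₀ β hτ hβ hτβ he
    have hfar : ∃ c ∈ B, ∃ d ∈ B, δ ^ τ₀ ≤ |c - d| := by
      apply exists_far (hpow0 _)
      by_contra hcon
      have h1 : (cnt (δ ^ τ₀) B : ℝ) ≤ 3 := by exact_mod_cast not_lt.1 hcon
      have h2 : f τ₀ ≤ e := by
        apply cancel
        rw [← hg]
        linarith
      linarith
    have hδη : δ ≤ δ ^ β * δ ^ τ₀ := by
      rw [← Real.rpow_add hδ0]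
      simpa using hanti (show β + τ₀ ≤ 1 by linarith)
    have hη1 : δ ^ β ≤ 1 := by simpa using hanti hβ.le
    have hr1 : δ ^ τ₀ ≤ 1 := by simpa using hanti hτ.le
    rcases quot_dichotomy hB (hpow0 τ₀) (hpow0 β)
      (mul_le_one₀ hη1 (hpow0 _).le hr1) hη1 hδη hfar with ⟨r, hr, hr1, hgap⟩ | hdense
    · left
      obtain ⟨τ, rfl⟩ := hlen ((hpow0 _).trans_le hr)
      refine ⟨τ, ?_, hlen2 hr, ?_⟩
      · apply hlen2
        simpa using hr1
      · intro u hu hu1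
        apply cancel
        have h1 := hgap (δ ^ u) (hpow0 u) (by
            rw [← Real.rpow_add hδ0]; exact hanti (by linarith)) (by
            rw [← Real.rpow_add hδ0]; simpa using hanti hu1)
        rw [← Real.rpow_add hδ0] at h1
        rw [mul_add, mul_add, mul_add, Real.exp_add, Real.exp_add, Real.exp_add, ← hg, ← hg,
          ← hg, ← hg]
        have h2 := hg1 (u + τ)
        have h3 : 75 * K ≤ Real.exp (L * e) := by nlinarith
        calc (cnt (δ ^ u) B : ℝ) * cnt (δ ^ τ) B * cnt (δ ^ τ₀) B
            = cnt (δ ^ u) B * cnt (δ ^ τ₀) B * cnt (δ ^ τ) B := by ring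
          _ ≤ 75 * K * cnt (δ ^ (u + τ)) B := h1
          _ ≤ Real.exp (L * e) * cnt (δ ^ (u + τ)) B := by gcongr
          _ = _ := by ring
    · right
      intro v hv0 hvβ
      have hW0 : 0 ≤ 45 * K / δ ^ τ₀ := div_nonneg (by linarith) (hpow0 _).le
      have h1 := one_le_of_sumDil hB (η := δ ^ β) (s := δ ^ v) (W := 45 * K / δ ^ τ₀)
        (by simpa using hanti (show β ≤ 1 by linarith)) hη1 (hanti hvβ) hW0 hdense
      have e1 : 1 / δ ^ τ₀ = Real.exp (L * τ₀) := by
        rw [hpow, Real.exp_neg, one_div, inv_inv]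
      have e2 : K / (cnt (δ ^ v) B : ℝ) = K * Real.exp (-(L * f v)) := by
        rw [hg, Real.exp_neg, div_eq_mul_inv]
      have e3 : δ ^ β * (cnt (δ ^ β) B : ℝ) / δ ^ v = Real.exp (L * (f β + v - β)) := by
        rw [hg, hpow, hpow, ← Real.exp_add, div_eq_mul_inv, ← Real.exp_neg, ← Real.exp_add]
        ring_nf
      by_contra! hcon
      have h2 : Real.exp (L * τ₀) * Real.exp (-(L * f v)) ≤ Real.exp (-(L * e)) := by
        rw [← Real.exp_add, Real.exp_le_exp]
        nlinarith [hcon.1]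
      have h3 : Real.exp (L * τ₀) * Real.exp (L * (f β + v - β)) ≤ Real.exp (-(L * e)) := by
        rw [← Real.exp_add, Real.exp_le_exp]
        nlinarith [hcon.2]
      have h4 : 10 ^ 6 * K ^ 2 * Real.exp (-(L * e)) ≤ 1 := by
        calc 10 ^ 6 * K ^ 2 * Real.exp (-(L * e)) ≤ Real.exp (L * e) * Real.exp (-(L * e)) := by
              gcongr
          _ = 1 := by rw [← Real.exp_add]; simp
      have h5 := Real.exp_pos (-(L * e))
      rw [div_eq_mul_one_div (45 * K) (δ ^ τ₀), e1, e2, e3] at h1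
      have h6 : 25 * (45 * K * Real.exp (L * τ₀)) *
          (402 * (K * Real.exp (-(L * f v))) + 20 * Real.exp (L * (f β + v - β))) =
          452250 * K ^ 2 * (Real.exp (L * τ₀) * Real.exp (-(L * f v))) +
          22500 * K * (Real.exp (L * τ₀) * Real.exp (L * (f β + v - β))) := by ring
      rw [h6] at h1
      have h7 : 452250 * K ^ 2 * (Real.exp (L * τ₀) * Real.exp (-(L * f v))) +
          22500 * K * (Real.exp (L * τ₀) * Real.exp (L * (f β + v - β))) ≤
          452250 * K ^ 2 * Real.exp (-(L * e)) + 22500 * K ^ 2 * Real.exp (-(L * e)) := by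
        gcongr
      nlinarith [mul_pos (show 0 < K ^ 2 by positivity) h5]
  · intro α β hα hαβ hβ he
    -- A piece of length `δ ^ α` that is rich at scale `δ ^ β` contains two points whose distance
    -- lies between these scales.
    obtain ⟨z, -, hz⟩ := exists_cell (δ := δ ^ β) (ρ := δ ^ α) B hB.nonempty
    set Z := B.filter (fun x => ⌊x / δ ^ α⌋ = z) with hZ
    have hfar : ∃ c ∈ Z, ∃ d ∈ Z, δ ^ β ≤ |c - d| := by
      apply exists_far (hpow0 _)
      by_contra hcon
      have h1 : (cnt (δ ^ β) Z : ℝ) ≤ 3 := by exact_mod_cast not_lt.1 hcon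
      have h2 : (cnt (δ ^ β) B : ℝ) ≤ cnt (δ ^ α) B * cnt (δ ^ β) Z := by exact_mod_cast hz
      have h3 := hlip 0 α hα
      rw [sub_zero] at h3
      have h4 : f β ≤ α + e := by
        apply cancel
        rw [mul_add, Real.exp_add, ← hg]
        have h5 : 0 < Real.exp (L * α) := Real.exp_pos _
        calc (cnt (δ ^ β) B : ℝ) ≤ cnt (δ ^ α) B * cnt (δ ^ β) Z := h2
          _ ≤ (5 * Real.exp (L * α) * 3) * 3 := by
            refine mul_le_mul (h3.trans ?_) h1 (by positivity) (by positivity)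
            gcongr
          _ ≤ _ := by nlinarith
      linarith
    obtain ⟨c, hc, d, hd, hcd⟩ := hfar
    obtain ⟨hcB, hc'⟩ := Finset.mem_filter.1 hc
    obtain ⟨hdB, hd'⟩ := Finset.mem_filter.1 hd
    have hcd2 := abs_sub_lt_of_floor (hpow0 α) (hc'.trans hd'.symm)
    obtain ⟨τ, hτ⟩ := hlen ((hpow0 β).trans_le hcd)
    refine ⟨τ, hlen2 (hτ ▸ hcd2.le), hlen2 (hτ ▸ hcd), ?_⟩
    intro u hu hu1
    apply cancel
    have hne : c ≠ d := by
      rintro rfl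
      simp at hτ
      exact absurd hτ (hpow0 τ).ne'
    have h1 := cnt_mul_cnt_le_of_pair hB hcB hdB hne (hpow0 u) (by simpa using hanti hu) (by
      rw [← hτ, ← Real.rpow_add hδ0]; simpa using hanti hu1)
    rw [← hτ, ← Real.rpow_add hδ0] at h1
    rw [mul_add, mul_add, Real.exp_add, Real.exp_add, ← hg, ← hg, ← hg]
    have h2 := hg1 (u + τ)
    have h3 : 3 * K ≤ Real.exp (L * e) := by nlinarith
    calc (cnt (δ ^ u) B : ℝ) * cnt (δ ^ τ) B ≤ 3 * K * cnt (δ ^ (u + τ)) B := h1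
      _ ≤ Real.exp (L * e) * cnt (δ ^ (u + τ)) B := by gcongr
      _ = _ := by ring

/-! ### Amplification of the slope -/

lemma le_of_step {f : ℝ → ℝ} {u₀ τ g : ℝ} (hτ : 0 ≤ τ)
    (h : ∀ u, u₀ ≤ u → u + τ ≤ 1 → f u + g ≤ f (u + τ)) (k : ℕ) (hk : u₀ + k * τ ≤ 1) :
    f u₀ + k * g ≤ f (u₀ + k * τ) := by
  induction k with
  | zero => simp
  | succ k ih =>
    push_cast at hk ⊢
    have h1 := ih (by linarith)
    have h2 := h (u₀ + k * τ) (by nlinarith [Nat.cast_nonneg (α := ℝ) k]) (by linarith)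
    rw [show u₀ + (k + 1) * τ = u₀ + k * τ + τ by ring]
    linarith

/-- The profile stays below slope `1 - c` at small `β`: otherwise superadditivity with a step
`τ ≈ β` would propagate slope almost `1` up to `f 1`. -/
lemma Profile.le_slope {κ σ e c β : ℝ} {f : ℝ → ℝ} (h : Profile κ σ e f) (hσ : 0 ≤ σ)
    (hc : 16 * c = 1 - σ) (hc0 : 0 < c) (hβ : 0 < β) (hβc : β ≤ 4 * c) (he : 0 < e)
    (heβ : e ≤ c * β) : f β ≤ (1 - c) * β := by
  by_contra! hcon
  have hc1 : c ≤ 1 / 16 := by linarith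
  have hcβ : 0 < c * β := by positivity
  obtain ⟨τ, hτ1, hτ2, hstep⟩ := h.pair ((1 - 3 * c) * β) β (by nlinarith) (by nlinarith)
    (by linarith) (by nlinarith)
  have hτβ : β / 2 ≤ τ := by nlinarith
  have hτ0 : 0 < τ := by linarith
  have hfτ : τ - c * β - e ≤ f τ := by
    have := h.lip τ β hτ2
    nlinarith
  -- `k` steps of length `τ` lead from `0` to within `τ` of `1`.
  set k := ⌊1 / τ⌋₊ with hk
  have hk1 : (k : ℝ) * τ ≤ 1 := by
    have := Nat.floor_le (a := 1 / τ) (by positivity)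
    rwa [le_div_iff₀ hτ0] at this
  have hk2 : 1 - τ < k * τ := by
    have := Nat.lt_floor_add_one (1 / τ)
    rw [div_lt_iff₀ hτ0] at this
    linarith
  have h1 := le_of_step (f := f) (u₀ := 0) (τ := τ) (g := f τ - e) hτ0.le
    (fun u hu hu1 => by linarith [hstep u hu hu1]) k (by linarith)
  have h2 := h.nonneg 0
  rw [zero_add] at h1
  have h3 := h.mono (k * τ) 1 hk1
  have h4 := h.one
  have hkβ : k * β ≤ 2 := by
    have : (k : ℝ) * (β / 2) ≤ k * τ := by gcongr
    linarith
  have hk0 : (0 : ℝ) ≤ k := Nat.cast_nonneg _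
  have h5 : (k : ℝ) * (f τ - e) ≥ k * τ - 6 * c := by
    have h6 : (k : ℝ) * (τ - 3 * (c * β)) ≤ k * (f τ - e) :=
      mul_le_mul_of_nonneg_left (by linarith) hk0
    have h7 : (k : ℝ) * β * c ≤ 2 * c := by gcongr
    linarith
  nlinarith

lemma Profile.le_add {κ σ e : ℝ} {f : ℝ → ℝ} (h : Profile κ σ e f) {s : ℝ} (hs : 0 ≤ s) :
    f s ≤ s + 2 * e := by
  linarith [h.lip 0 s hs, h.zero]

/-- One step of the amplification of the slope: the quotient dichotomy at `τ₀` must end in its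
superadditive alternative, whose steps gain the slope `κ` on top of the slope `a` at `τ₀`. -/
lemma Profile.amplify {κ σ e c a τ₀ Λ' Λ : ℝ} {f : ℝ → ℝ} (h : Profile κ σ e f) (hσ : 0 ≤ σ)
    (hκ : 0 < κ) (hκ1 : κ < 1) (hc : 16 * c = 1 - σ) (hc0 : 0 < c) (hΛ' : Λ' * (κ * c) = 4)
    (hΛ : 16 * (2 + Λ') ≤ Λ * κ) (hτ₀ : 0 < τ₀) (hτ₀1 : (2 + Λ') * τ₀ ≤ c) (hΛτ : Λ * τ₀ ≤ 1)
    (he : 0 < e) (heτ : 100 * e ≤ κ ^ 2 * τ₀) (ha : 0 ≤ a) (haf : a * τ₀ ≤ f τ₀) :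
    (a + κ / 2) * (Λ * τ₀) ≤ f (Λ * τ₀) := by
  have hc1 : c ≤ 1 / 16 := by linarith
  have hκτ : 100 * e ≤ κ * τ₀ := by nlinarith [mul_pos hκ hτ₀]
  have hκτ2 : 100 * e ≤ τ₀ := by nlinarith
  have ha2 : a ≤ 2 := by
    have := h.le_add hτ₀.le
    by_contra! h2
    nlinarith
  have hΛ'0 : 0 < Λ' := by
    by_contra! h0
    nlinarith [mul_pos hκ hc0]
  set β := Λ' * τ₀ with hβ
  have hβ0 : 0 < β := by positivity
  have hκcβ : κ * (c * β) = 4 * τ₀ := by rw [hβ]; linear_combination τ₀ * hΛ'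
  have hcβ : 4 * τ₀ ≤ c * β := by
    have : 0 < c * β := by positivity
    nlinarith
  have hβc : β ≤ 4 * c := by nlinarith
  have hfτ₀ := h.frost τ₀ hτ₀.le (by nlinarith)
  rcases h.main τ₀ β hτ₀ hβ0 (by nlinarith) (by linarith) with ⟨τ, hτ0, hτ1, hstep⟩ | hdense
  swap
  · exfalso
    have hslope := h.le_slope hσ hc hc0 hβ0 hβc he (by linarith)
    -- At `v = c β / 2`, non-concentration and the slope bound contradict both alternatives.
    have h1 := hdense (c * β / 2) (by positivity) (by nlinarith)
    have h2 := h.frost (c * β / 2) (by positivity) (by nlinarith)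
    rcases h1 with h1 | h1 <;> nlinarith
  have hfτ := h.frost τ hτ0 (by nlinarith)
  set u₀ := τ₀ + β with hu₀
  have hu1 : u₀ + τ ≤ (2 + Λ') * τ₀ := by rw [hu₀, hβ]; linarith
  -- The gain `f τ₀ ≥ κ τ₀ - e` of a single step cannot exceed the step, up to errors.
  have hτκ : κ * τ₀ ≤ 2 * τ := by
    have h1 := hstep u₀ le_rfl (by linarith)
    have h2 := h.lip u₀ (u₀ + τ) (by linarith)
    have h3 := h.nonneg τ
    linarith
  have hκτ0 : 0 < κ * τ₀ := by positivity
  have hτpos : 0 < τ := by linarith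
  set θ := Λ * τ₀ with hθ
  have hθ1 : 16 * (u₀ + τ) ≤ κ * θ := by
    have : 16 * (2 + Λ') * τ₀ ≤ Λ * κ * τ₀ := by gcongr
    rw [hθ]
    linarith
  have hu₀0 : 0 < u₀ := by positivity
  have hθu : u₀ + τ ≤ θ := by nlinarith
  -- `k` steps of length `τ` lead from `u₀` to within `τ` of `θ`.
  set k := ⌊(θ - u₀) / τ⌋₊ with hk
  have hk1 : (k : ℝ) * τ ≤ θ - u₀ := by
    have := Nat.floor_le (a := (θ - u₀) / τ) (div_nonneg (by linarith) hτ0)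
    rwa [le_div_iff₀ hτpos] at this
  have hk2 : θ - u₀ - τ < k * τ := by
    have := Nat.lt_floor_add_one ((θ - u₀) / τ)
    rw [div_lt_iff₀ hτpos] at this
    linarith
  have h1 := le_of_step (f := f) (u₀ := u₀) (τ := τ) (g := f τ + f τ₀ - e) hτ0
    (fun u hu hu1 => by linarith [hstep u hu hu1]) k (by linarith)
  have h2 := h.mono (u₀ + k * τ) θ (by linarith)
  have h3 := h.nonneg u₀
  have hk0 : (0 : ℝ) ≤ k := Nat.cast_nonneg _
  have h4 : (k : ℝ) * ((κ + a) * τ - 2 * e) ≤ k * (f τ + f τ₀ - e) := by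
    have : a * τ ≤ a * τ₀ := by gcongr
    exact mul_le_mul_of_nonneg_left (by linarith) hk0
  -- the accumulated error of the `k` steps
  have h5 : (k : ℝ) * (2 * e) ≤ κ * θ / 16 := by
    have h6 : 50 * e ≤ κ * τ := by
      have : κ * (κ * τ₀) ≤ κ * (2 * τ) := mul_le_mul_of_nonneg_left hτκ hκ.le
      linarith
    have h7 : (k : ℝ) * (50 * e) ≤ k * (κ * τ) := mul_le_mul_of_nonneg_left h6 hk0
    have h8 : κ * (k * τ) ≤ κ * θ := mul_le_mul_of_nonneg_left (by linarith) hκ.le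
    have h9 : 0 < κ * θ := by linarith
    linarith
  have h6 : (κ + a) * (θ - u₀ - τ) ≤ (κ + a) * (k * τ) :=
    mul_le_mul_of_nonneg_left hk2.le (by linarith)
  have h7 : (κ + a) * (u₀ + τ) ≤ 3 * (u₀ + τ) :=
    mul_le_mul_of_nonneg_right (by linarith) (by linarith)
  have h8 : κ * τ₀ ≤ κ * θ := mul_le_mul_of_nonneg_left (by linarith) hκ.le
  linarith

/-- No profile with lower growth exponent `κ > 0` and top exponent `σ < 1` exists: the slope
would increase by `κ / 2` at each of the scales `Λ ^ i θ₀`, but it is bounded. -/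
lemma no_profile {κ σ : ℝ} (hκ : 0 < κ) (hκ1 : κ < 1) (hσ : 0 ≤ σ) (hσ1 : σ < 1) :
    ∃ e : ℝ, 0 < e ∧ ∀ f : ℝ → ℝ, ¬ Profile κ σ e f := by
  obtain ⟨c, hc⟩ : ∃ c, 16 * c = 1 - σ := ⟨(1 - σ) / 16, by ring⟩
  have hc0 : 0 < c := by linarith
  obtain ⟨Λ', hΛ'⟩ : ∃ Λ', Λ' * (κ * c) = 4 := ⟨4 / (κ * c), by field_simp⟩
  have hΛ'0 : 0 < Λ' := by
    by_contra! h0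
    nlinarith [mul_pos hκ hc0]
  obtain ⟨Λ, hΛ⟩ : ∃ Λ, Λ * κ = 16 * (2 + Λ') := ⟨16 * (2 + Λ') / κ, by field_simp⟩
  have hΛ1 : 1 ≤ Λ := by
    by_contra! h0
    nlinarith
  obtain ⟨n, hn⟩ := exists_nat_gt (4 / κ)
  rw [div_lt_iff₀ hκ] at hn
  have hΛn : 0 < Λ ^ n := by positivity
  -- The starting scale is small enough for `n` amplifications, each by a factor `Λ` in the scale.
  set θ : ℝ := c / ((2 + Λ') * Λ ^ n) with hθ
  have hθ0 : 0 < θ := by positivity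
  refine ⟨κ ^ 2 * θ / 100, by positivity, fun f hf => ?_⟩
  have hsmall : ∀ i ≤ n, (2 + Λ') * (Λ ^ i * θ) ≤ c := by
    intro i hi
    have h1 : Λ ^ i ≤ Λ ^ n := pow_le_pow_right₀ hΛ1 hi
    calc (2 + Λ') * (Λ ^ i * θ) ≤ (2 + Λ') * (Λ ^ n * θ) := by gcongr
      _ = c := by rw [hθ]; field_simp
  have hbig : ∀ i, θ ≤ Λ ^ i * θ := fun i => by
    have : 1 ≤ Λ ^ i := one_le_pow₀ hΛ1
    nlinarith
  have key : ∀ i ≤ n, (i * (κ / 2)) * (Λ ^ i * θ) ≤ f (Λ ^ i * θ) := by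
    intro i
    induction i with
    | zero => intro _; simpa using hf.nonneg _
    | succ i ih =>
      intro hi
      have h1 := ih (by omega)
      have h2 := hsmall (i + 1) hi
      have h3 : Λ ^ (i + 1) * θ = Λ * (Λ ^ i * θ) := by ring
      have h4 := hbig (i + 1)
      have := hf.amplify (a := i * (κ / 2)) (τ₀ := Λ ^ i * θ) hσ hκ hκ1 hc hc0 hΛ' hΛ.ge
        (by positivity) (hsmall i (by omega)) (by rw [← h3]; nlinarith) (by positivity)
        (by nlinarith [hbig i, sq_nonneg κ]) (by positivity) h1
      rw [h3]
      push_cast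
      convert this using 2
      ring
  have h1 := key n le_rfl
  have h2 := hf.le_add (s := Λ ^ n * θ) (by positivity)
  have h3 := hbig n
  have h4 : κ ^ 2 * θ ≤ 1 * θ := by
    gcongr
    nlinarith
  have h5 : 2 * (Λ ^ n * θ) < n * (κ / 2) * (Λ ^ n * θ) := by
    gcongr
    linarith
  linarith

/-! ### Cosines of a non-concentrated set of angles -/

/-- On each quadrant shrunk by `d`, sine and cosine have constant sign and absolute value at
least `2 d / π`. -/
lemma exists_sign_cos_sin {d : ℝ} (hd : 0 ≤ d) (j : ℕ) :
    ∃ s t : ℝ, |s| = 1 ∧ |t| = 1 ∧ ∀ x, j * (Real.pi / 2) + d ≤ x →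
      x ≤ (j + 1) * (Real.pi / 2) - d →
      2 / Real.pi * d ≤ s * Real.cos x ∧ 2 / Real.pi * d ≤ t * Real.sin x := by
  have hπ := Real.pi_pos
  induction j with
  | zero =>
    refine ⟨1, 1, by simp, by simp, fun x hx1 hx2 => ?_⟩
    simp only [Nat.cast_zero, zero_mul, zero_add, one_mul] at hx1 hx2 ⊢
    constructor
    · have h1 := Real.mul_le_sin (x := Real.pi / 2 - x) (by linarith) (by linarith)
      rw [Real.sin_pi_div_two_sub] at h1
      refine le_trans ?_ h1
      gcongr
      linarith
    · have h1 := Real.mul_le_sin (x := x) (by linarith) (by linarith)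
      refine le_trans ?_ h1
      gcongr
  | succ j ih =>
    obtain ⟨s, t, hs, ht, h⟩ := ih
    refine ⟨-t, s, by simpa using ht, hs, fun x hx1 hx2 => ?_⟩
    push_cast at hx1 hx2
    obtain ⟨h1, h2⟩ := h (x - Real.pi / 2) (by linarith) (by linarith)
    rw [Real.cos_sub_pi_div_two] at h1
    rw [Real.sin_sub_pi_div_two] at h2
    exact ⟨by linarith, h1⟩

lemma mul_abs_sub_le_abs_cos_sub {d : ℝ} (hd : 0 ≤ d) (j : ℕ) {x y : ℝ}
    (hx1 : j * (Real.pi / 2) + d ≤ x) (hx2 : x ≤ (j + 1) * (Real.pi / 2) - d)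
    (hy1 : j * (Real.pi / 2) + d ≤ y) (hy2 : y ≤ (j + 1) * (Real.pi / 2) - d) :
    2 / Real.pi * d * |x - y| ≤ |Real.cos x - Real.cos y| := by
  wlog hxy : x < y generalizing x y
  · rcases eq_or_lt_of_le (not_lt.1 hxy) with rfl | hlt
    · simp
    · rw [abs_sub_comm, abs_sub_comm (Real.cos x)]
      exact this hy1 hy2 hx1 hx2 hlt
  obtain ⟨s, t, -, ht, h⟩ := exists_sign_cos_sin hd j
  obtain ⟨ξ, hξ, h1⟩ := exists_hasDerivAt_eq_slope Real.cos (fun x => -Real.sin x) hxy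
    Real.continuous_cos.continuousOn (fun x _ => Real.hasDerivAt_cos x)
  have h2 := (h ξ (by linarith [hξ.1]) (by linarith [hξ.2])).2
  have h3 : 2 / Real.pi * d ≤ |Real.sin ξ| := by
    refine h2.trans ((le_abs_self _).trans ?_)
    rw [abs_mul, ht, one_mul]
  rw [eq_div_iff (by linarith)] at h1
  have h4 : |Real.cos x - Real.cos y| = |Real.sin ξ| * |x - y| := by
    rw [← abs_mul, ← abs_neg]
    congr 1
    linarith
  rw [h4]
  gcongr

/-- Almost all of a non-concentrated set `V` of angles avoids the boundaries of the octants,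
so some octant shifted by `a₀`, shrunk by `ω`, carries a fixed proportion of `V`. -/
lemma exists_octant {V : Set ℝ} {δ κ ω ρ₁ a₀ : ℝ} (hV : V ⊆ Ico 0 (2 * Real.pi))
    (hm : 0 < volume.real V) (hω : δ < ω) (hωρ : ω < ρ₁)
    (hω34 : 34 * ω ^ κ < 1)
    (hNC : ∀ ρ, δ < ρ → ρ < ρ₁ → ∀ θ₀, volume.real {θ | θ ∈ V ∧ |θ - θ₀| ≤ ρ} ≤
      ρ ^ κ * volume.real V)
    (ha₀ : a₀ ∈ Ico 0 (2 * Real.pi)) :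
    ∃ j : ℕ, volume.real V ≤ 32 * volume.real {θ | θ ∈ V ∧ j * (Real.pi / 4) + ω ≤ θ + a₀ ∧
      θ + a₀ ≤ (j + 1) * (Real.pi / 4) - ω} := by
  have hπ := Real.pi_pos
  set W : ℕ → Set ℝ := fun j => {θ | θ ∈ V ∧ j * (Real.pi / 4) + ω ≤ θ + a₀ ∧
      θ + a₀ ≤ (j + 1) * (Real.pi / 4) - ω} with hW
  set Z : ℕ → Set ℝ := fun j => {θ | θ ∈ V ∧ |θ - (j * (Real.pi / 4) - a₀)| ≤ ω} with hZ
  have hVfin : volume V ≠ ⊤ :=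
    ne_top_of_le_ne_top measure_Ico_lt_top.ne (measure_mono hV)
  have hfin : ∀ {U : Set ℝ}, U ⊆ V → volume U ≠ ⊤ := fun h =>
    ne_top_of_le_ne_top hVfin (measure_mono h)
  have hcov : V ⊆ (⋃ j ∈ Finset.range 16, W j) ∪ (⋃ j ∈ Finset.range 17, Z j) := by
    intro θ hθ
    have hθ' := hV hθ
    have h0 : 0 ≤ (θ + a₀) / (Real.pi / 4) := div_nonneg (by linarith [hθ'.1, ha₀.1]) (by linarith)
    obtain ⟨j, hj⟩ : ∃ j, j = ⌊(θ + a₀) / (Real.pi / 4)⌋₊ := ⟨_, rfl⟩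
    have h1 := Nat.floor_le h0
    have h2 := Nat.lt_floor_add_one ((θ + a₀) / (Real.pi / 4))
    rw [← hj] at h1 h2
    rw [le_div_iff₀ (by linarith)] at h1
    rw [div_lt_iff₀ (by linarith)] at h2
    have hj16 : j < 16 := by
      have : (j : ℝ) * (Real.pi / 4) < 16 * (Real.pi / 4) := by linarith [hθ'.2, ha₀.2]
      exact_mod_cast lt_of_mul_lt_mul_right this (by linarith)
    by_cases hA : θ + a₀ < j * (Real.pi / 4) + ω
    · refine Or.inr (mem_biUnion (x := j) (by simp; omega) ⟨hθ, ?_⟩)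
      rw [abs_le]
      constructor <;> linarith
    by_cases hB : (j + 1) * (Real.pi / 4) - ω < θ + a₀
    · refine Or.inr (mem_biUnion (x := j + 1) (by simp; omega) ⟨hθ, ?_⟩)
      rw [abs_le]
      push_cast
      constructor <;> linarith
    · exact Or.inl (mem_biUnion (x := j) (by simpa using hj16)
        ⟨hθ, not_lt.1 hA, not_lt.1 hB⟩)
  have hsubW : (⋃ j ∈ Finset.range 16, W j) ⊆ V := iUnion₂_subset fun j _ θ hθ => hθ.1
  have hsubZ : (⋃ j ∈ Finset.range 17, Z j) ⊆ V := iUnion₂_subset fun j _ θ hθ => hθ.1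
  have h1 : volume.real V ≤ ∑ j ∈ Finset.range 16, volume.real (W j) +
      ∑ j ∈ Finset.range 17, volume.real (Z j) :=
    calc volume.real V ≤ volume.real ((⋃ j ∈ Finset.range 16, W j) ∪
          (⋃ j ∈ Finset.range 17, Z j)) :=
          measureReal_mono hcov (hfin (union_subset hsubW hsubZ))
      _ ≤ volume.real (⋃ j ∈ Finset.range 16, W j) +
          volume.real (⋃ j ∈ Finset.range 17, Z j) := measureReal_union_le _ _
      _ ≤ _ := add_le_add (measureReal_biUnion_finset_le _ _)
          (measureReal_biUnion_finset_le _ _)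
  have h2 : ∑ j ∈ Finset.range 17, volume.real (Z j) ≤ 17 * (ω ^ κ * volume.real V) := by
    refine (Finset.sum_le_sum fun j _ => hNC ω hω hωρ _).trans ?_
    simp
  by_contra! hcon
  have h3 : ∑ j ∈ Finset.range 16, volume.real (W j) ≤ 16 * (volume.real V / 32) := by
    refine (Finset.sum_le_sum (g := fun _ => volume.real V / 32) fun j _ => ?_).trans ?_
    · have := hcon j
      simp only [W]
      linarith
    · simp
  nlinarith

/-- The set of values `cos (2 (a + a₀))` over a suitable finite piece `A` of `V` is bounded away
from zero, of diameter at most one, non-concentrated at all scales, and of full size at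
scale `δ`. -/
lemma exists_piece {V : Set ℝ} {δ κ ω ρ₁ a₀ : ℝ} (hV : V ⊆ Ico 0 (2 * Real.pi))
    (hm : 0 < volume.real V) (hδ : 0 < δ) (hω : δ < ω) (hωρ : ω < ρ₁) (hρ₁ : ρ₁ ≤ 1)
    (hκ1 : κ ≤ 1) (hω34 : 34 * ω ^ κ < 1)
    (hNC : ∀ ρ, δ < ρ → ρ < ρ₁ → ∀ θ₀, volume.real {θ | θ ∈ V ∧ |θ - θ₀| ≤ ρ} ≤
      ρ ^ κ * volume.real V)
    (ha₀ : a₀ ∈ Ico 0 (2 * Real.pi)) :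
    ∃ A : Finset ℝ, (↑A ⊆ V) ∧ A.Nonempty ∧
      (∀ a ∈ A, ω ≤ |Real.cos (2 * (a + a₀))|) ∧
      (∀ a ∈ A, ∀ a' ∈ A, |Real.cos (2 * (a + a₀)) - Real.cos (2 * (a' + a₀))| ≤ 1) ∧
      (∀ s, δ ≤ s → s ≤ 1 →
        ω * ρ₁ / 64 * s ^ (-κ) ≤ cnt s (A.image fun a => Real.cos (2 * (a + a₀)))) ∧
      volume.real V * ω / (128 * δ) ≤ cnt δ (A.image fun a => Real.cos (2 * (a + a₀))) := by
  have hπ := Real.pi_pos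
  have hπ4 := Real.pi_le_four
  have hω0 : 0 < ω := hδ.trans hω
  obtain ⟨j, hj⟩ := exists_octant hV hm hω hωρ hω34 hNC ha₀
  set W := {θ | θ ∈ V ∧ j * (Real.pi / 4) + ω ≤ θ + a₀ ∧
      θ + a₀ ≤ (j + 1) * (Real.pi / 4) - ω} with hW
  have hVfin : volume V ≠ ⊤ := ne_top_of_le_ne_top measure_Ico_lt_top.ne (measure_mono hV)
  have htb : TotallyBounded W :=
    (isCompact_Icc (a := (0 : ℝ)) (b := 2 * Real.pi)).totallyBounded.subset
      (fun θ hθ => Ico_subset_Icc_self (hV hθ.1))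
  obtain ⟨t, htW, htfin, hcov⟩ := Metric.finite_approx_of_totallyBounded htb δ hδ
  set A := htfin.toFinset with hA
  have hAW : ∀ a ∈ A, a ∈ W := fun a ha => htW (htfin.mem_toFinset.1 ha)
  have hnet : ∀ θ ∈ W, ∃ a ∈ A, |θ - a| ≤ δ := by
    intro θ hθ
    obtain ⟨a, ha, hθa⟩ := mem_iUnion₂.1 (hcov hθ)
    exact ⟨a, htfin.mem_toFinset.2 ha, (Metric.mem_ball.1 hθa).le⟩
  have hAne : A.Nonempty := by
    by_contra h
    rw [Finset.not_nonempty_iff_eq_empty] at h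
    have : W = ∅ := by
      rw [eq_empty_iff_forall_notMem]
      intro θ hθ
      obtain ⟨a, ha, -⟩ := hnet θ hθ
      simp [h] at ha
    rw [this] at hj
    simp at hj
    linarith
  set c : ℝ → ℝ := fun a => Real.cos (2 * (a + a₀)) with hc
  have hd : (0 : ℝ) ≤ 2 * ω := by linarith
  have hπω : ω ≤ 2 / Real.pi * (2 * ω) := by
    rw [div_mul_eq_mul_div, le_div_iff₀ hπ]
    nlinarith
  have hlo : ∀ a ∈ A, j * (Real.pi / 2) + 2 * ω ≤ 2 * (a + a₀) := fun a ha => by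
    linarith [(hAW a ha).2.1]
  have hhi : ∀ a ∈ A, 2 * (a + a₀) ≤ (j + 1) * (Real.pi / 2) - 2 * ω := fun a ha => by
    linarith [(hAW a ha).2.2]
  obtain ⟨s₀, _, hs₀, -, hsign⟩ := exists_sign_cos_sin hd j
  have hpos : ∀ a ∈ A, ω ≤ s₀ * c a := fun a ha =>
    hπω.trans (hsign _ (hlo a ha) (hhi a ha)).1
  have habs : ∀ a, s₀ * c a ≤ 1 := fun a => by
    refine (le_abs_self _).trans ?_
    rw [abs_mul, hs₀, one_mul]
    exact Real.abs_cos_le_one _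
  have hbil : ∀ a ∈ A, ∀ a' ∈ A, ω * |a - a'| ≤ |c a - c a'| := by
    intro a ha a' ha'
    refine le_trans ?_ (mul_abs_sub_le_abs_cos_sub hd j (hlo a ha) (hhi a ha)
      (hlo a' ha') (hhi a' ha'))
    rw [← mul_sub, abs_mul, abs_two]
    have : (a + a₀) - (a' + a₀) = a - a' := by ring
    rw [this]
    have := abs_nonneg (a - a')
    have h1 : ω * |a - a'| ≤ 2 / Real.pi * (2 * ω) * |a - a'| := by gcongr
    nlinarith
  -- each cell of the image at scale `s` accounts for a window of length `≲ s / ω` of `W`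
  have hcount : ∀ s w : ℝ, δ ≤ s → (∀ θ₀, volume.real {θ | θ ∈ V ∧ |θ - θ₀| ≤ 2 * s / ω} ≤ w) →
      volume.real V ≤ 32 * (cnt s (A.image c) * w) := by
    intro s w hs hw
    have hs0 : 0 < s := hδ.trans_le hs
    have hrep : ∀ z ∈ A.image (fun a => ⌊c a / s⌋), ∃ a ∈ A, ⌊c a / s⌋ = z := fun z hz => by
      simpa using hz
    choose! rep hrepA hrepz using hrep
    have hsub : W ⊆ ⋃ z ∈ A.image (fun a => ⌊c a / s⌋),
        {θ | θ ∈ V ∧ |θ - rep z| ≤ 2 * s / ω} := by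
      intro θ hθ
      obtain ⟨a, ha, hθa⟩ := hnet θ hθ
      have hz := Finset.mem_image_of_mem (fun a => ⌊c a / s⌋) ha
      refine mem_biUnion (Finset.mem_coe.2 hz) ⟨hθ.1, ?_⟩
      have h1 := abs_sub_lt_of_floor hs0 (hrepz _ hz).symm
      have h2 := hbil a ha _ (hrepA _ hz)
      have h3 : |a - rep ⌊c a / s⌋| ≤ s / ω := by
        rw [le_div_iff₀ hω0]
        linarith
      have h4 : δ ≤ s / ω := by
        rw [le_div_iff₀ hω0]
        nlinarith
      calc |θ - rep ⌊c a / s⌋| ≤ |θ - a| + |a - rep ⌊c a / s⌋| := abs_sub_le _ _ _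
        _ ≤ s / ω + s / ω := by linarith
        _ = 2 * s / ω := by ring
    have h1 : volume.real W ≤ ∑ z ∈ A.image (fun a => ⌊c a / s⌋), w := by
      refine (measureReal_mono hsub ?_).trans ((measureReal_biUnion_finset_le _ _).trans
        (Finset.sum_le_sum fun z _ => hw _))
      exact ne_top_of_le_ne_top hVfin (measure_mono (iUnion₂_subset fun z _ θ hθ => hθ.1))
    rw [Finset.sum_const, nsmul_eq_mul] at h1
    have h2 : (A.image (fun a => ⌊c a / s⌋)).card = cnt s (A.image c) := by
      unfold cnt
      rw [Finset.image_image]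
      rfl
    rw [h2] at h1
    linarith
  refine ⟨A, fun a ha => (hAW a ha).1, hAne, ?_, ?_, ?_, ?_⟩
  · intro a ha
    refine (hpos a ha).trans ((le_abs_self _).trans ?_)
    rw [abs_mul, hs₀, one_mul]
  · intro a ha a' ha'
    have h1 := hpos a ha
    have h2 := hpos a' ha'
    have h3 := habs a
    have h4 := habs a'
    have h5 : |c a - c a'| = |s₀ * c a - s₀ * c a'| := by
      rw [← mul_sub, abs_mul, hs₀, one_mul]
    refine h5.trans_le ?_
    rw [abs_le]
    constructor <;> linarith
  · intro s hs hs1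
    have hs0 : 0 < s := hδ.trans_le hs
    have hsκ : s ^ (-κ) ≤ 1 / s := by
      rw [one_div, ← Real.rpow_neg_one]
      exact Real.rpow_le_rpow_of_exponent_ge hs0 hs1 (by linarith)
    have hcnt1 : (1 : ℝ) ≤ cnt s (A.image c) := by
      exact_mod_cast cnt_pos (hAne.image _)
    have hsκ0 : 0 < s ^ (-κ) := Real.rpow_pos_of_pos hs0 _
    -- At scales where non-concentration says nothing, the trivial lower bound `1` suffices.
    rcases lt_or_ge (2 * s / ω) ρ₁ with hlt | hge
    · have hδs : δ < 2 * s / ω := by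
        rw [lt_div_iff₀ hω0]
        nlinarith
      have h1 := hcount s _ hs (hNC _ hδs hlt)
      have h2 : (2 * s / ω) ^ κ = (2 / ω) ^ κ * s ^ κ := by
        rw [← Real.mul_rpow (by positivity) hs0.le]
        congr 1; ring
      have h3 : (2 / ω) ^ κ ≤ 2 / ω := by
        have : (1 : ℝ) ≤ 2 / ω := by rw [le_div_iff₀ hω0]; linarith
        simpa using Real.rpow_le_rpow_of_exponent_le this hκ1
      have h4 : s ^ κ * s ^ (-κ) = 1 := by rw [← Real.rpow_add hs0]; simp
      have h5 : 0 < s ^ κ := Real.rpow_pos_of_pos hs0 _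
      have h6 : volume.real V * 1 ≤ volume.real V *
          (32 * (cnt s (A.image c) * (2 / ω * s ^ κ))) := by
        rw [h2] at h1
        calc _ ≤ 32 * (cnt s (A.image c) * ((2 / ω) ^ κ * s ^ κ * volume.real V)) := by
              linarith
          _ ≤ 32 * (cnt s (A.image c) * (2 / ω * s ^ κ * volume.real V)) := by gcongr
          _ = _ := by ring
      have h7 := le_of_mul_le_mul_left h6 hm
      calc ω * ρ₁ / 64 * s ^ (-κ) ≤ ω * 1 / 64 * s ^ (-κ) * 1 := by
            rw [mul_one]; gcongr
        _ ≤ ω * 1 / 64 * s ^ (-κ) * (32 * (cnt s (A.image c) * (2 / ω * s ^ κ))) := by gcongr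
        _ = (ω / ω) * (s ^ κ * s ^ (-κ)) * cnt s (A.image c) := by ring
        _ = cnt s (A.image c) := by rw [h4, div_self hω0.ne']; ring
    · rw [le_div_iff₀ hω0] at hge
      refine le_trans ?_ hcnt1
      have hρ0 : 0 < ρ₁ := hω0.trans hωρ
      calc ω * ρ₁ / 64 * s ^ (-κ) ≤ ω * ρ₁ / 64 * (1 / s) := by gcongr
        _ ≤ 1 := by
          rw [mul_one_div, div_le_one hs0]
          linarith
  · have h1 := hcount δ (2 * (2 * δ / ω)) le_rfl (by
      intro θ₀
      have hsub : {θ | θ ∈ V ∧ |θ - θ₀| ≤ 2 * δ / ω} ⊆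
          Icc (θ₀ - 2 * δ / ω) (θ₀ + 2 * δ / ω) := by
        intro θ hθ
        have := abs_le.1 hθ.2
        exact ⟨by linarith, by linarith⟩
      refine (measureReal_mono hsub (by simp)).trans ?_
      rw [Real.volume_real_Icc_of_le (by
        have : 0 ≤ 2 * δ / ω := by positivity
        linarith)]
      linarith)
    rw [div_le_iff₀ (by positivity)]
    have h2 : volume.real V * ω ≤ 32 * (cnt δ (A.image c) * (2 * (2 * δ / ω))) * ω := by gcongr
    have h3 : 32 * (cnt δ (A.image c) * (2 * (2 * δ / ω))) * ω =
        cnt δ (A.image c) * (128 * δ) := by field_simp; ring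
    linarith

/-! ### Sums of products from a covering of a sumset -/

/-- `z` is, up to scaling by `q` and a bounded error, a signed sum of `m + n` elements of the
set of integers `F`, with `m` positive and `n` negative signs. -/
def NearSum (F : Finset ℤ) (q : ℝ) (m n : ℕ) (z : ℝ) : Prop :=
  ∃ l ∈ m • F - n • F, |q * z - l| ≤ m + n

lemma NearSum.add {F : Finset ℤ} {q z z' : ℝ} {m n m' n' : ℕ} (h : NearSum F q m n z)
    (h' : NearSum F q m' n' z') : NearSum F q (m + m') (n + n') (z + z') := by
  obtain ⟨l, hl, h1⟩ := h
  obtain ⟨l', hl', h2⟩ := h'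
  refine ⟨l + l', ?_, ?_⟩
  · rw [add_smul, add_smul, add_sub_add_comm]
    exact Finset.add_mem_add hl hl'
  · push_cast
    have : q * (z + z') - (l + l') = (q * z - l) + (q * z' - l') := by ring
    rw [this]
    refine (abs_add_le _ _).trans ?_
    linarith

lemma NearSum.neg {F : Finset ℤ} {q z : ℝ} {m n : ℕ} (h : NearSum F q m n z) :
    NearSum F q n m (-z) := by
  obtain ⟨l, hl, h1⟩ := h
  refine ⟨-l, ?_, ?_⟩
  · rw [← neg_sub (m • F) (n • F)]
    exact Finset.neg_mem_neg hl
  · push_cast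
    have : q * -z - -(l : ℝ) = -(q * z - l) := by ring
    rw [this, abs_neg]
    linarith

lemma NearSum.sub {F : Finset ℤ} {q z z' : ℝ} {m n m' n' : ℕ} (h : NearSum F q m n z)
    (h' : NearSum F q m' n' z') : NearSum F q (m + n') (n + m') (z - z') := by
  rw [sub_eq_add_neg]
  exact h.add h'.neg

lemma cnt_le_of_nearSum {F : Finset ℤ} {δ μ : ℝ} {m n : ℕ} (hδ : 0 < δ) (hμ : 1 ≤ μ)
    {Z : Finset ℝ} (hZ : ∀ z ∈ Z, NearSum F (2 * μ / δ) m n z) :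
    cnt δ Z ≤ (2 * (m + n) + 1) * (m • F - n • F).card := by
  choose! l hl hlz using hZ
  have h1 := cnt_image_le Z l id hδ (m + n) (by
    intro x hx y hy hxy
    have h2 := hlz x hx
    have h3 := hlz y hy
    rw [hxy] at h2
    have h4 : |2 * μ / δ * (x - y)| ≤ 2 * (m + n) := by
      have : 2 * μ / δ * (x - y) = (2 * μ / δ * x - l y) - (2 * μ / δ * y - l y) := by ring
      rw [this]
      refine (abs_sub _ _).trans ?_
      linarith
    rw [abs_mul, abs_of_pos (by positivity), div_mul_eq_mul_div, div_le_iff₀ hδ] at h4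
    have h5 := abs_nonneg (x - y)
    simp only [id]
    push_cast
    nlinarith)
  rw [Finset.image_id] at h1
  refine h1.trans ?_
  gcongr
  intro w hw
  obtain ⟨z, hz, rfl⟩ := Finset.mem_image.1 hw
  exact hl z hz

/-- If few `δ`-balls cover `μ E + ν G`, then by the Plünnecke–Ruzsa inequality iterated sums of
`E` are not much larger than `G`; since products of `B` are averages of elements of `E`,
this bounds sums of products of `B`. -/
lemma cnt_sumProd_le {δ μ ν b₀ : ℝ} {B E G T : Finset ℝ} (hδ : 0 < δ) (hμ : 1 ≤ μ)
    (hb : b₀ ∈ B) (hG : G.Nonempty)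
    (hprod : ∀ b ∈ B, ∀ b' ∈ B, ∃ e ∈ E, ∃ e' ∈ E, b * b' = (e + e') / 2)
    (hcov : ∀ e ∈ E, ∀ g ∈ G, ∃ t ∈ T, |μ * e + ν * g - t| ≤ δ) :
    (cnt δ (G.image (ν * ·)) : ℝ) ≤ 7 * T.card ∧
    (cnt δ (B.image (b₀ * ·) + sumProd B + B.image (b₀ * ·)) : ℝ) ≤
      41 * (7 * T.card / cnt δ (G.image (ν * ·))) ^ 20 * (7 * T.card) ∧
    (cnt δ (B.image (b₀ * ·)) : ℝ) ≤
      5 * (7 * T.card / cnt δ (G.image (ν * ·))) ^ 2 * (7 * T.card) := by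
  classical
  set F : Finset ℤ := E.image (fun e => ⌊μ * e / δ⌋) with hF
  set H : Finset ℤ := (G.image (ν * ·)).image (fun x => ⌊x / δ⌋) with hH
  have hHc : H.card = cnt δ (G.image (ν * ·)) := rfl
  have hHne : H.Nonempty := (hG.image _).image _
  rw [← hHc]
  have hH0 : (0 : ℝ) < H.card := by exact_mod_cast hHne.card_pos
  obtain ⟨e₀, he₀, -⟩ := hprod b₀ hb b₀ hb
  have hFne : F.Nonempty := ⟨_, Finset.mem_image_of_mem _ he₀⟩
  -- Two pairs served by the same `t` have sums within `2δ`, so their rounded sums differ by at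
  -- most `3`.
  have hsum : (H + F).card ≤ 7 * T.card := by
    choose! t htT ht using hcov
    have h1 : H + F = (E ×ˢ G).image (fun p => ⌊ν * p.2 / δ⌋ + ⌊μ * p.1 / δ⌋) := by
      ext z
      simp only [hH, hF, Finset.mem_add, Finset.mem_image, Finset.mem_product, Prod.exists]
      constructor
      · rintro ⟨_, ⟨_, ⟨g, hg, rfl⟩, rfl⟩, _, ⟨e, he, rfl⟩, rfl⟩
        exact ⟨e, g, ⟨he, hg⟩, rfl⟩
      · rintro ⟨e, g, ⟨he, hg⟩, rfl⟩
        exact ⟨_, ⟨_, ⟨g, hg, rfl⟩, rfl⟩, _, ⟨e, he, rfl⟩, rfl⟩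
    have h2 := card_image_le_mul (E ×ˢ G) (fun p => t p.1 p.2)
      (fun p => ⌊ν * p.2 / δ⌋ + ⌊μ * p.1 / δ⌋) 3 (by
        rintro ⟨e, g⟩ hp ⟨e', g'⟩ hp' htt
        rw [Finset.mem_product] at hp hp'
        simp only at htt hp hp' ⊢
        have h3 := abs_le.1 (ht e hp.1 g hp.2)
        have h4 := abs_le.1 (ht e' hp'.1 g' hp'.2)
        rw [htt] at h3
        have h5 : |(μ * e / δ + ν * g / δ) - (μ * e' / δ + ν * g' / δ)| ≤ 2 := by
          have : (μ * e / δ + ν * g / δ) - (μ * e' / δ + ν * g' / δ) =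
            ((μ * e + ν * g) - (μ * e' + ν * g')) / δ := by ring
          rw [this, abs_div, abs_of_pos hδ, div_le_iff₀ hδ, abs_le]
          constructor <;> linarith
        obtain ⟨h6, h7⟩ := abs_le.1 h5
        have a1 := Int.floor_le (ν * g / δ)
        have a2 := Int.lt_floor_add_one (ν * g / δ)
        have b1 := Int.floor_le (μ * e / δ)
        have b2 := Int.lt_floor_add_one (μ * e / δ)
        have c1 := Int.floor_le (ν * g' / δ)
        have c2 := Int.lt_floor_add_one (ν * g' / δ)
        have d1 := Int.floor_le (μ * e' / δ)
        have d2 := Int.lt_floor_add_one (μ * e' / δ)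
        have u : ((⌊ν * g / δ⌋ + ⌊μ * e / δ⌋ - (⌊ν * g' / δ⌋ + ⌊μ * e' / δ⌋) : ℤ) : ℝ) < (4 : ℤ) := by
          push_cast; linarith
        have l : ((-4 : ℤ) : ℝ) < ((⌊ν * g / δ⌋ + ⌊μ * e / δ⌋ - (⌊ν * g' / δ⌋ + ⌊μ * e' / δ⌋) : ℤ) : ℝ) := by
          push_cast; linarith
        have u' := Int.cast_lt.1 u
        have l' := Int.cast_lt.1 l
        rw [abs_le]
        constructor <;> push_cast <;> omega)
    rw [← h1] at h2
    have h3 : ((E ×ˢ G).image (fun p => t p.1 p.2)).card ≤ T.card := by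
      apply Finset.card_le_card
      intro w hw
      obtain ⟨p, hp, rfl⟩ := Finset.mem_image.1 hw
      rw [Finset.mem_product] at hp
      exact htT _ hp.1 _ hp.2
    omega
  have hHsum : H.card ≤ (H + F).card := Finset.card_le_card_add_right hFne
  have hsumR : ((H + F).card : ℝ) ≤ 7 * T.card := by exact_mod_cast hsum
  have hHR : (H.card : ℝ) ≤ 7 * T.card := by exact_mod_cast hHsum.trans hsum
  have hplu : ∀ m n : ℕ, ((m • F - n • F).card : ℝ) ≤
      (7 * T.card / H.card) ^ (m + n) * (7 * T.card) := by
    intro m n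
    have h1 := Finset.pluennecke_ruzsa_inequality_nsmul_sub_nsmul_add hHne F m n
    have h2 : ((m • F - n • F).card : ℝ) ≤
        ((H + F).card / H.card : ℝ) ^ (m + n) * H.card := by
      have h3 := (NNRat.cast_le (K := ℝ)).2 h1
      push_cast at h3
      exact h3
    refine h2.trans ?_
    gcongr
  have hBB : ∀ b ∈ B, ∀ b' ∈ B, NearSum F (2 * μ / δ) 2 0 (b * b') := by
    intro b hb b' hb'
    obtain ⟨e, he, e', he', h⟩ := hprod b hb b' hb'
    refine ⟨⌊μ * e / δ⌋ + ⌊μ * e' / δ⌋, ?_, ?_⟩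
    · rw [zero_smul, sub_zero, two_smul]
      exact Finset.add_mem_add (Finset.mem_image_of_mem _ he) (Finset.mem_image_of_mem _ he')
    · rw [h]
      have a1 := Int.floor_le (μ * e / δ)
      have a2 := Int.lt_floor_add_one (μ * e / δ)
      have b1 := Int.floor_le (μ * e' / δ)
      have b2 := Int.lt_floor_add_one (μ * e' / δ)
      have h2 : 2 * μ / δ * ((e + e') / 2) = μ * e / δ + μ * e' / δ := by ring
      rw [h2, abs_le]
      push_cast
      constructor <;> linarith
  have hBBmem : ∀ z ∈ B * B, NearSum F (2 * μ / δ) 2 0 z := by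
    intro z hz
    obtain ⟨b, hb, b', hb', rfl⟩ := Finset.mem_mul.1 hz
    exact hBB b hb b' hb'
  have hb₀ : ∀ z ∈ B.image (b₀ * ·), NearSum F (2 * μ / δ) 2 0 z := by
    intro z hz
    obtain ⟨b, hb', rfl⟩ := Finset.mem_image.1 hz
    exact hBB b₀ hb b hb'
  have h4 : ∀ z ∈ B * B + B * B + B * B + B * B, NearSum F (2 * μ / δ) 8 0 z := by
    intro z hz
    obtain ⟨z₁, hz₁, w, hw, rfl⟩ := Finset.mem_add.1 hz
    obtain ⟨z₂, hz₂, w', hw', rfl⟩ := Finset.mem_add.1 hz₁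
    obtain ⟨z₃, hz₃, w'', hw'', rfl⟩ := Finset.mem_add.1 hz₂
    have h := (((hBBmem _ hz₃).add (hBBmem _ hw'')).add (hBBmem _ hw')).add (hBBmem _ hw)
    simpa only [Nat.reduceAdd] using h
  refine ⟨hHR, ?_, ?_⟩
  · have h1 := cnt_le_of_nearSum (F := F) (m := 12) (n := 8) (Z := B.image (b₀ * ·) + sumProd B +
      B.image (b₀ * ·)) hδ hμ (by
        intro z hz
        obtain ⟨z₁, hz₁, w, hw, rfl⟩ := Finset.mem_add.1 hz
        obtain ⟨w', hw', z₂, hz₂, rfl⟩ := Finset.mem_add.1 hz₁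
        obtain ⟨p, hp, q, hq, rfl⟩ := Finset.mem_sub.1 hz₂
        have h := ((hb₀ _ hw').add ((h4 _ hp).sub (h4 _ hq))).add (hb₀ _ hw)
        simpa only [Nat.reduceAdd] using h)
    have h2 : (cnt δ (B.image (b₀ * ·) + sumProd B + B.image (b₀ * ·)) : ℝ) ≤
        41 * ((12 • F - 8 • F).card : ℝ) := by exact_mod_cast h1
    have h3 := hplu 12 8
    linarith
  · have h1 := cnt_le_of_nearSum (F := F) (m := 2) (n := 0) hδ hμ hb₀
    have h2 : (cnt δ (B.image (b₀ * ·)) : ℝ) ≤ 5 * ((2 • F - 0 • F).card : ℝ) := by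
      exact_mod_cast h1
    have h3 := hplu 2 0
    linarith

/-! ### The covering number of the amplified set -/

/-- The quantitative contradiction: if `μ E + ν G` is covered by fewer than `X Q` intervals,
where `B` and `G` both have about `Q` elements up to powers of `X`, then the set `B` of
cosines is an approximate ring up to powers of `X`, which no non-concentrated set of size
between those of a point and an interval can be. -/
lemma mul_le_card_of_cover {κ σ e δ X Q μ ν b₀ : ℝ} {B E G T : Finset ℝ} (hδ : 0 < δ)
    (hδ1 : δ < 1) (hX : 10 ^ 5 ≤ X) (hno : ∀ f, ¬ Profile κ σ e f) (hμ : 1 ≤ μ) (hb : b₀ ∈ B)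
    (hb0 : 1 / X ^ 2 ≤ |b₀|) (habs : ∀ b ∈ B, |b| ≤ 1)
    (hdiam : ∀ b ∈ B, ∀ b' ∈ B, |b - b'| ≤ 1)
    (hfrost : ∀ s, δ ≤ s → s ≤ 1 → 1 / (64 * X ^ 3) * s ^ (-κ) ≤ cnt s B)
    (hQ : 0 < Q) (hBQ : Q / (128 * X ^ 2) ≤ cnt δ B) (hGQ : Q / (128 * X ^ 2) ≤ cnt δ G)
    (hν : 1 / X ≤ |ν|)
    (hprod : ∀ b ∈ B, ∀ b' ∈ B, ∃ e ∈ E, ∃ e' ∈ E, b * b' = (e + e') / 2)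
    (hcov : ∀ e ∈ E, ∀ g ∈ G, ∃ t ∈ T, |μ * e + ν * g - t| ≤ δ)
    (hXe : X ^ 300 ≤ δ ^ (-e)) (hXσ : X ^ 14 * Q ≤ δ ^ (-σ)) : X * Q ≤ T.card := by
  by_contra! hT
  have hX0 : 0 < X := by linarith
  have hX1 : 1 ≤ X := by linarith
  have hG : G.Nonempty := by
    by_contra h
    rw [Finset.not_nonempty_iff_eq_empty] at h
    subst h
    have : 0 < Q / (128 * X ^ 2) := by positivity
    simp [cnt] at hGQ
    linarith
  obtain ⟨-, h2, h3⟩ := cnt_sumProd_le hδ hμ hb hG hprod hcov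
  set c : ℝ := (cnt δ (G.image (ν * ·)) : ℝ) with hc
  set n : ℝ := (T.card : ℝ) with hn
  set R := 7 * n / c with hR
  have hn0 : 0 ≤ n := by positivity
  -- Dilation by `ν` costs at most a factor `5 X`.
  have hGc : (cnt δ G : ℝ) ≤ 5 * X * c := by
    obtain ⟨k, hk, hk5⟩ := exists_nat_five hX1
    have h := cnt_image_le_cnt_image G id (ν * ·) hδ hδ k (by
      intro y _ y' _ h
      simp only [id]
      rw [← mul_sub, abs_mul] at h
      have h1 : 1 / X * |y - y'| ≤ δ := (by gcongr : _ ≤ |ν| * |y - y'|).trans h.le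
      rw [div_mul_eq_mul_div, one_mul, div_le_iff₀ hX0, mul_comm] at h1
      exact h1.trans (by gcongr))
    rw [Finset.image_id] at h
    have h' : (cnt δ G : ℝ) ≤ (2 * k + 1) * c := by rw [hc]; exact_mod_cast h
    exact h'.trans (by gcongr)
  have hc0 : 0 < c := by
    have : 0 < Q / (128 * X ^ 2) := by positivity
    have : 0 < 5 * X * c := by linarith
    exact pos_of_mul_pos_right this (by positivity)
  -- `R` is the doubling constant in the Plünnecke–Ruzsa inequality.
  have hRX : R ≤ X ^ 5 := by
    rw [hR, div_le_iff₀ hc0]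
    have h := hGQ.trans hGc
    rw [div_le_iff₀ (by positivity)] at h
    calc 7 * n ≤ 7 * (X * Q) := by gcongr
      _ ≤ 7 * (X * (5 * X * c * (128 * X ^ 2))) := by gcongr
      _ = 4480 * X ^ 4 * c := by ring
      _ ≤ X * X ^ 4 * c := by gcongr; linarith
      _ = X ^ 5 * c := by ring
  have hR0 : 0 ≤ R := by positivity
  have hb0' : 0 < |b₀| := lt_of_lt_of_le (by positivity) hb0
  have hbne : b₀ ≠ 0 := abs_pos.1 hb0'
  have hbX : 1 / |b₀| ≤ X ^ 2 := by
    rw [div_le_iff₀ hb0']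
    rwa [div_le_iff₀ (by positivity), mul_comm] at hb0
  have h5b : 5 / |b₀| ≤ 5 * X ^ 2 := by
    calc 5 / |b₀| = 5 * (1 / |b₀|) := by ring
      _ ≤ _ := by gcongr
  have hM : (cnt δ (B.image (b₀ * ·) + sumProd B + B.image (b₀ * ·)) : ℝ) ≤
      X ^ 104 * cnt δ B := by
    rw [div_le_iff₀ (by positivity)] at hBQ
    calc _ ≤ _ := h2
      _ ≤ 41 * (X ^ 5) ^ 20 * (7 * (X * Q)) := by gcongr
      _ ≤ 41 * (X ^ 5) ^ 20 * (7 * (X * (cnt δ B * (128 * X ^ 2)))) := by gcongr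
      _ = 36736 * (X ^ 103 * cnt δ B) := by ring
      _ ≤ X * (X ^ 103 * cnt δ B) := by gcongr; linarith
      _ = X ^ 104 * cnt δ B := by ring
  have hring := approxRing_of_sumset hδ hb hbne habs hdiam hM
  have hK : 10 ^ 6 * ((5 / |b₀|) ^ 3 * 275 ^ 2 * X ^ 104) ^ 2 ≤ δ ^ (-e) := by
    have h1 : (5 / |b₀|) ^ 3 * 275 ^ 2 * X ^ 104 ≤ X ^ 112 := by
      calc (5 / |b₀|) ^ 3 * 275 ^ 2 * X ^ 104 ≤ (5 * X ^ 2) ^ 3 * 275 ^ 2 * X ^ 104 := by gcongr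
        _ = 9453125 * X ^ 110 := by ring
        _ ≤ (10 ^ 5) ^ 2 * X ^ 110 := by gcongr; norm_num
        _ ≤ X ^ 2 * X ^ 110 := by gcongr
        _ = X ^ 112 := by ring
    calc 10 ^ 6 * ((5 / |b₀|) ^ 3 * 275 ^ 2 * X ^ 104) ^ 2
        ≤ (10 ^ 5) ^ 2 * (X ^ 112) ^ 2 := by gcongr; norm_num
      _ ≤ X ^ 2 * (X ^ 112) ^ 2 := by gcongr
      _ = X ^ 226 := by ring
      _ ≤ X ^ 300 := pow_le_pow_right₀ hX1 (by norm_num)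
      _ ≤ _ := hXe
  have hBσ : (cnt δ B : ℝ) ≤ δ ^ (-σ) := by
    have h := cnt_le_dilate hδ hbne (habs _ hb) B id 0
    simp only [Finset.image_id, id, add_zero] at h
    calc (cnt δ B : ℝ) ≤ _ := h
      _ ≤ 5 * X ^ 2 * (5 * (X ^ 5) ^ 2 * (7 * (X * Q))) := by
          refine mul_le_mul h5b (h3.trans ?_) (by positivity) (by positivity)
          gcongr
      _ = 175 * (X ^ 13 * Q) := by ring
      _ ≤ X * (X ^ 13 * Q) := by gcongr; linarith
      _ = X ^ 14 * Q := by ring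
      _ ≤ _ := hXσ
  have hfr : ∀ s, δ ≤ s → s ≤ 1 → δ ^ e * s ^ (-κ) ≤ cnt s B := by
    intro s hs hs1
    refine le_trans ?_ (hfrost s hs hs1)
    have hs0 : 0 < s := hδ.trans_le hs
    gcongr
    have h1 : δ ^ e = 1 / δ ^ (-e) := by rw [Real.rpow_neg hδ.le, one_div, inv_inv]
    rw [h1]
    refine one_div_le_one_div_of_le (by positivity) (le_trans ?_ hXe)
    calc 64 * X ^ 3 ≤ X * X ^ 3 := by gcongr; linarith
      _ = X ^ 4 := by ring
      _ ≤ X ^ 300 := pow_le_pow_right₀ hX1 (by norm_num)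
  exact hno _ (hring.profile hδ1 hK hfr hBσ)

/-- For a bounded set the infimum defining `covN` is attained. -/
lemma exists_card_eq_covN {D : Set ℂ} {C δ : ℝ} (hδ : 0 < δ) (hD : ∀ d ∈ D, ‖d‖ ≤ C) :
    ∃ T : Finset ℂ, T.card = covN (fun x y : ℂ => ‖x - y‖) δ D ∧
      ∀ s ∈ D, ∃ t ∈ T, ‖s - t‖ ≤ δ := by
  refine Nat.sInf_mem (s := {n : ℕ | ∃ T : Finset ℂ, T.card = n ∧ ∀ s ∈ D, ∃ t ∈ T, ‖s - t‖ ≤ δ})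
    ?_
  obtain ⟨t, ht, hc⟩ := Metric.totallyBounded_iff.1
    (isCompact_closedBall (0 : ℂ) C).totallyBounded δ hδ
  refine ⟨_, ht.toFinset, rfl, fun s hs => ?_⟩
  have h := hc (mem_closedBall_zero_iff.2 (hD s hs))
  simp only [mem_iUnion, Metric.mem_ball, dist_eq_norm] at h
  obtain ⟨y, hy, h⟩ := h
  exact ⟨y, ht.mem_toFinset.2 hy, h.le⟩

lemma re_amplified (p q γ lam : ℝ) {x y : ℂ} (hx : x = Complex.exp ((p + q : ℝ) * Complex.I))
    (hy : y = Complex.exp ((p - q : ℝ) * Complex.I)) :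
    (x * y + (γ : ℂ) / (x * y) + (lam : ℂ) * (x / y + y / x)).re =
      (1 + γ) * Real.cos (2 * p) + 2 * lam * Real.cos (2 * q) := by
  have h1 : x * y = Complex.exp ((2 * p : ℝ) * Complex.I) := by
    rw [hx, hy, ← Complex.exp_add]; congr 1; push_cast; ring
  have h2 : (x * y)⁻¹ = Complex.exp ((-(2 * p) : ℝ) * Complex.I) := by
    rw [h1, ← Complex.exp_neg]; congr 1; push_cast; ring
  have h3 : x / y = Complex.exp ((2 * q : ℝ) * Complex.I) := by
    rw [hx, hy, ← Complex.exp_sub]; congr 1; push_cast; ring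
  have h4 : y / x = Complex.exp ((-(2 * q) : ℝ) * Complex.I) := by
    rw [hx, hy, ← Complex.exp_sub]; congr 1; push_cast; ring
  rw [div_eq_mul_inv, h2, h1, h3, h4]
  simp only [Complex.add_re, Complex.re_ofReal_mul, Complex.exp_ofReal_mul_I_re, Real.cos_neg]
  ring

/-- The set of angles of a set of complex numbers. -/
def angles (S : Set ℂ) : Set ℝ :=
  {θ : ℝ | θ ∈ Ico 0 (2 * Real.pi) ∧ Complex.exp (θ * Complex.I) ∈ S}

lemma volume_angles_ball_le {S : Set ℂ} {m ρ κ θ₀ : ℝ} (hρ : 0 < ρ) (hm : 0 ≤ m)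
    (hS : arcMeasure S = ENNReal.ofReal m)
    (hNC : ∀ a : ℂ, arcMeasure (S ∩ {z | ‖z - a‖ ≤ ρ}) < ENNReal.ofReal (ρ ^ κ) * arcMeasure S) :
    volume.real {θ | θ ∈ angles S ∧ |θ - θ₀| ≤ ρ} ≤ ρ ^ κ * volume.real (angles S) := by
  have hS' : volume (angles S) = ENNReal.ofReal m := hS
  have h := (hNC (Complex.exp (θ₀ * Complex.I))).le
  rw [hS, ← ENNReal.ofReal_mul (by positivity)] at h
  have h1 : volume {θ | θ ∈ angles S ∧ |θ - θ₀| ≤ ρ} ≤ ENNReal.ofReal (ρ ^ κ * m) := by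
    refine le_trans (measure_mono ?_) h
    rintro θ ⟨⟨hθ, hθS⟩, hd⟩
    refine ⟨hθ, hθS, ?_⟩
    change ‖Complex.exp (θ * Complex.I) - Complex.exp (θ₀ * Complex.I)‖ ≤ ρ
    have h2 : Complex.exp (θ * Complex.I) - Complex.exp (θ₀ * Complex.I) =
        Complex.exp (θ₀ * Complex.I) * (Complex.exp (Complex.I * (θ - θ₀ : ℝ)) - 1) := by
      rw [mul_sub, ← Complex.exp_add, mul_one]; congr 2; push_cast; ring
    rw [h2, norm_mul, Complex.norm_exp_ofReal_mul_I, one_mul]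
    exact (Real.norm_exp_I_mul_ofReal_sub_one_le).trans hd
  rw [measureReal_def, measureReal_def, hS', ENNReal.toReal_ofReal hm]
  exact ENNReal.toReal_le_of_le_ofReal (by positivity) h1

lemma exp_neg_mem {S : Set ℂ} (hS : S⁻¹ = S) {θ : ℝ} (h : Complex.exp (θ * Complex.I) ∈ S) :
    Complex.exp ((-θ : ℝ) * Complex.I) ∈ S := by
  rw [← hS, Set.mem_inv, ← Complex.exp_neg]
  convert h using 2
  push_cast; ring

lemma exp_mem_mul {S : Set ℂ} {a b c d θ : ℝ} (ha : Complex.exp (a * Complex.I) ∈ S)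
    (hb : Complex.exp (b * Complex.I) ∈ S) (hc : Complex.exp (c * Complex.I) ∈ S)
    (hd : Complex.exp (d * Complex.I) ∈ S) (hθ : θ = a + b + c + d) :
    Complex.exp (θ * Complex.I) ∈ S * S * S * S := by
  have h := Set.mul_mem_mul (Set.mul_mem_mul (Set.mul_mem_mul ha hb) hc) hd
  rw [← Complex.exp_add, ← Complex.exp_add, ← Complex.exp_add] at h
  convert h using 2
  rw [hθ]; push_cast; ring

lemma rpow_lt_of_lt {δ a c : ℝ} (hδ : 0 < δ) (ha : 0 < a) (hc : 0 < c) (h : δ < c ^ (1 / a)) :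
    δ ^ a < c := by
  have h1 := Real.rpow_lt_rpow hδ.le h ha
  rwa [← Real.rpow_mul hc.le, one_div_mul_cancel ha.ne', Real.rpow_one] at h1

/-- **Scalar amplification, complex case.** For all `0 < σ < 1` and `0 < κ < 1` there is
`ε₃ > 0` such that for all small `δ > 0`: if `S` is a symmetric finite union of
`δ`-arcs of the unit circle with `|S| = δ^{1−σ}` and no concentration at scales
`δ < ρ < δ^{ε₃}`, and `γ, λ ∈ ℝ` with `γ > 0` and `|λ| ≥ δ^{ε₃}`, then
`D = {xy + γ/(xy) + λ(x/y + y/x) : x, y ∈ S_{(4)}}` has `N_δ(D) ≥ δ^{−ε₃−σ}`. -/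
theorem scalar_amplification_complex :
    ∀ σ κ : ℝ, 0 < σ → σ < 1 → 0 < κ → κ < 1 →
      ∃ ε₃ : ℝ, 0 < ε₃ ∧ ∃ δ₀ : ℝ, 0 < δ₀ ∧
        ∀ δ : ℝ, 0 < δ → δ < δ₀ →
          ∀ S : Set ℂ,
            (∃ T : Finset ℝ,
              S = (fun θ : ℝ => Complex.exp (θ * Complex.I)) '' (⋃ t ∈ T, Icc t (t + δ))) →
            S⁻¹ = S →
            arcMeasure S = ENNReal.ofReal (δ ^ (1 - σ)) →
            (∀ ρ : ℝ, δ < ρ → ρ < δ ^ ε₃ →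
              ∀ a : ℂ, arcMeasure (S ∩ {z | ‖z - a‖ ≤ ρ}) <
                ENNReal.ofReal (ρ ^ κ) * arcMeasure S) →
            ∀ γ lam : ℝ, 0 < γ → δ ^ ε₃ ≤ |lam| →
              δ ^ (-ε₃ - σ) ≤
                (covN (fun x y : ℂ => ‖x - y‖) δ
                  {d : ℂ | ∃ x ∈ S * S * S * S, ∃ y ∈ S * S * S * S,
                    d = x * y + (γ : ℂ) / (x * y) + (lam : ℂ) * (x / y + y / x)} : ℝ) := by
  classical
  intro σ κ hσ hσ1 hκ hκ1
  obtain ⟨e, he, hno⟩ := no_profile (σ := (1 + σ) / 2) hκ hκ1 (by linarith) (by linarith)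
  obtain ⟨ε, hε, hε1, hε2⟩ : ∃ ε : ℝ, 0 < ε ∧ 300 * ε ≤ e ∧ 28 * ε ≤ 1 - σ :=
    ⟨min (e / 300) ((1 - σ) / 28), lt_min (by linarith) (by linarith),
      by linarith [min_le_left (e / 300) ((1 - σ) / 28)],
      by linarith [min_le_right (e / 300) ((1 - σ) / 28)]⟩
  -- The two bounds on `δ` make `δ ^ (-ε)` exceed all constants and `δ ^ (2 ε κ)` less than `1 / 34`.
  refine ⟨ε, hε, min ((1 / 10 ^ 5 : ℝ) ^ (1 / ε)) ((1 / 34 : ℝ) ^ (1 / (2 * ε * κ))),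
    by positivity, ?_⟩
  intro δ hδ hδ₀ S hSarc hSinv hSm hNC γ lam hγ hlam
  have hδ5 := rpow_lt_of_lt hδ hε (by norm_num) (hδ₀.trans_le (min_le_left _ _))
  have hδ34 := rpow_lt_of_lt hδ (by positivity) (by norm_num) (hδ₀.trans_le (min_le_right _ _))
  have hδ1 : δ < 1 := by
    by_contra! h
    have := Real.one_le_rpow h hε.le
    norm_num at hδ5
    linarith
  set X := δ ^ (-ε) with hXdef
  have hX0 : 0 < X := by positivity
  have hXinv : δ ^ ε = 1 / X := by rw [hXdef, Real.rpow_neg hδ.le, one_div, inv_inv]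
  have hXpow : ∀ n : ℕ, X ^ n = δ ^ (-(n * ε)) := fun n => by
    rw [hXdef, ← Real.rpow_mul_natCast hδ.le]; congr 1; ring
  have hX5 : 10 ^ 5 ≤ X := by
    rw [hXinv] at hδ5
    exact (one_div_lt_one_div hX0 (by positivity)).1 hδ5 |>.le
  have hX1 : 1 < X := by linarith
  have hω2 : δ ^ (2 * ε) = 1 / X ^ 2 := by
    rw [hXpow 2, Real.rpow_neg hδ.le, one_div, inv_inv]; norm_num
  have hmpos : 0 < δ ^ (1 - σ) := by positivity
  have hV : angles S ⊆ Ico 0 (2 * Real.pi) := fun θ h => h.1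
  have hVm : volume.real (angles S) = δ ^ (1 - σ) := by
    rw [measureReal_def, show volume (angles S) = _ from hSm, ENNReal.toReal_ofReal hmpos.le]
  have hδω : δ < 1 / X ^ 2 := by
    rw [← hω2]
    calc δ = δ ^ (1 : ℝ) := (Real.rpow_one δ).symm
      _ < _ := Real.rpow_lt_rpow_of_exponent_gt hδ hδ1 (by linarith)
  have hωρ : 1 / X ^ 2 < 1 / X :=
    one_div_lt_one_div_of_lt hX0 (by nlinarith)
  have hρ1 : 1 / X ≤ 1 := by rw [div_le_one hX0]; exact hX1.le
  have hω34 : 34 * (1 / X ^ 2) ^ κ < 1 := by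
    rw [← hω2, ← Real.rpow_mul hδ.le]; linarith
  have hNC' : ∀ ρ, δ < ρ → ρ < 1 / X → ∀ θ₀, volume.real {θ | θ ∈ angles S ∧ |θ - θ₀| ≤ ρ} ≤
      ρ ^ κ * volume.real (angles S) := fun ρ h1 h2 θ₀ =>
    volume_angles_ball_le (hδ.trans h1) hmpos.le hSm (hNC ρ h1 (hXinv ▸ h2))
  have piece := fun a₀ => exists_piece (a₀ := a₀) hV (by rw [hVm]; exact hmpos) hδ hδω hωρ hρ1
    hκ1.le hω34 hNC'
  obtain ⟨A₁, hA₁, ⟨a₀, ha₀⟩, hbig, hdiam, hfrost, hcard₁⟩ :=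
    piece 0 ⟨le_rfl, by positivity⟩
  obtain ⟨A₂, hA₂, -, -, -, -, hcard₂⟩ := piece a₀ (hV (hA₁ ha₀))
  have hQ : δ ^ (1 - σ) * (1 / X ^ 2) / (128 * δ) = δ ^ (-σ) / (128 * X ^ 2) := by
    rw [show 1 - σ = 1 + -σ by ring, Real.rpow_add hδ, Real.rpow_one]
    field_simp
  rw [hVm, hQ] at hcard₁ hcard₂
  have hNX : δ ^ (-ε - σ) = X * δ ^ (-σ) := by
    rw [hXdef, ← Real.rpow_add hδ]; rfl
  -- Boundedness of the set keeps the infimum `covN` away from its junk value `0`.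
  have hnorm : ∀ x ∈ S * S * S * S, ‖x‖ = 1 := by
    obtain ⟨T, hT⟩ := hSarc
    have h1 : ∀ x ∈ S, ‖x‖ = 1 := by
      intro x hx
      rw [hT] at hx
      obtain ⟨θ, -, rfl⟩ := hx
      exact Complex.norm_exp_ofReal_mul_I θ
    rintro x ⟨_, ⟨_, ⟨a, ha, b, hb, rfl⟩, c, hc, rfl⟩, d, hd, rfl⟩
    simp [h1 a ha, h1 b hb, h1 c hc, h1 d hd]
  obtain ⟨T, hT, hcov⟩ := exists_card_eq_covN (C := 1 + γ + |lam| * 2) (δ := δ)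
    (D := {d : ℂ | ∃ x ∈ S * S * S * S, ∃ y ∈ S * S * S * S,
      d = x * y + (γ : ℂ) / (x * y) + (lam : ℂ) * (x / y + y / x)}) hδ (by
    rintro d ⟨x, hx, y, hy, rfl⟩
    have hx := hnorm x hx
    have hy := hnorm y hy
    refine (norm_add_le _ _).trans (add_le_add ((norm_add_le _ _).trans ?_) ?_)
    · simp [hx, hy, abs_of_pos hγ]
    · rw [norm_mul, Complex.norm_real, Real.norm_eq_abs]
      gcongr
      refine (norm_add_le _ _).trans ?_
      rw [norm_div, norm_div, hx, hy]
      norm_num)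
  rw [← hT, hNX]
  -- The real parts of the centres cover the real parts of the set.
  refine le_trans ?_ (Nat.cast_le.2 (Finset.card_image_le (s := T) (f := Complex.re)))
  refine mul_le_card_of_cover (B := A₁.image fun a => Real.cos (2 * (a + 0)))
    (G := A₂.image fun a => Real.cos (2 * (a + a₀)))
    (E := (A₁ ×ˢ A₁).image (fun p => Real.cos (2 * (p.1 + p.2))) ∪
      (A₁ ×ˢ A₁).image (fun p => Real.cos (2 * (p.1 - p.2))))
    (μ := 1 + γ) (ν := 2 * lam) hδ hδ1 hX5 hno (by linarith)
    (Finset.mem_image_of_mem _ ha₀) (hbig a₀ ha₀) ?_ ?_ ?_ (by positivity) hcard₁ hcard₂ ?_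
    ?_ ?_ ?_ ?_
  · simp only [Finset.forall_mem_image]
    exact fun a _ => Real.abs_cos_le_one _
  · simp only [Finset.forall_mem_image]
    exact fun a ha a' ha' => hdiam a ha a' ha'
  · intro s h1 h2
    refine le_trans (le_of_eq ?_) (hfrost s h1 h2)
    congr 1
    field_simp
  · rw [← hXinv, abs_mul, abs_two]
    linarith [abs_nonneg lam]
  · simp only [Finset.forall_mem_image]
    intro a ha a' ha'
    refine ⟨_, Finset.mem_union_left _ (Finset.mem_image_of_mem _ (Finset.mk_mem_product ha ha')),
      _, Finset.mem_union_right _ (Finset.mem_image_of_mem _ (Finset.mk_mem_product ha ha')), ?_⟩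
    simp only [add_zero, mul_add, mul_sub, Real.cos_add, Real.cos_sub]
    ring
  · -- `p = a ± a'` and `q = g + a₀`, so that `p + q` and `p - q` are signed sums of four angles.
    have key : ∀ a ∈ A₁, ∀ a' : ℝ, Complex.exp (a' * Complex.I) ∈ S → ∀ g ∈ A₂,
        ∃ t ∈ T.image Complex.re, |(1 + γ) * Real.cos (2 * (a + a')) +
          2 * lam * Real.cos (2 * (g + a₀)) - t| ≤ δ := by
      intro a ha a' ha' g hg
      have h1 := (hA₁ ha).2
      have h2 := (hA₂ hg).2
      have h3 := (hA₁ ha₀).2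
      obtain ⟨t, ht, htd⟩ := hcov _ ⟨_, exp_mem_mul h1 ha' h2 h3 rfl, _,
        exp_mem_mul h1 ha' (exp_neg_mem hSinv h2) (exp_neg_mem hSinv h3) rfl, rfl⟩
      refine ⟨_, Finset.mem_image_of_mem _ ht, ?_⟩
      have h := (Complex.abs_re_le_norm _).trans htd
      rw [Complex.sub_re, re_amplified (a + a') (g + a₀) γ lam] at h
      · exact h
      · congr 3; ring
      · congr 3; ring
    intro e' he' g' hg'
    obtain ⟨g, hg, rfl⟩ := Finset.mem_image.1 hg'
    rcases Finset.mem_union.1 he' with h | h <;>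
      obtain ⟨⟨a, a'⟩, hp, rfl⟩ := Finset.mem_image.1 h <;>
      obtain ⟨ha, ha'⟩ := Finset.mem_product.1 hp
    · exact key a ha a' (hA₁ ha').2 g hg
    · simpa only [sub_eq_add_neg] using key a ha (-a') (exp_neg_mem hSinv (hA₁ ha').2) g hg
  · rw [hXpow]
    exact Real.rpow_le_rpow_of_exponent_ge hδ hδ1.le (by push_cast; linarith)
  · rw [hXpow, ← Real.rpow_add hδ]
    exact Real.rpow_le_rpow_of_exponent_ge hδ hδ1.le (by push_cast; linarith)
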